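/- Let P = A ∪ B be an ℓ-divided set with A not in convex position, |A| ≥ 5 and |B| ≥ 5, with ℓ vertical, A to the left of ℓ, and all points of P having distinct x-coordinates. If W_i and W_{i+1} are consecutive a*-wedges with w_i = 2 = w_{i+1} and 1 ≤ i < t, then there is an ℓ-divided 5-hole in P. -/

import Mathlib

noncomputable section

/-- Points of the plane. -/
abbrev Pt : Type := ℝ × ℝ

/-- The cross product (signed area) of two planar vectors. -/
def cross2 (u v : Pt) : ℝ := u.1 * v.2 - u.2 * v.1

/-- The dot product of two planar vectors. -/
def dotp (v p : Pt) : ℝ := v.1 * p.1 + v.2 * p.2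

/-- A set of points in the plane is in general position if no three of its points
are collinear. -/
def GenPos (P : Set Pt) : Prop :=
  ∀ p ∈ P, ∀ q ∈ P, ∀ r ∈ P, p ≠ q → p ≠ r → q ≠ r →
    ¬ Collinear ℝ ({p, q, r} : Set Pt)

/-- A set of points is in convex position if no point of the set lies in the convex
hull of the other points. -/
def ConvexPos (S : Set Pt) : Prop :=
  ∀ p ∈ S, p ∉ convexHull ℝ (S \ {p})

/-- `H` is a `k`-hole in `P`: a subset of `P` of size `k` in convex position whose
convex hull contains no point of `P \ H`. -/
def IsKHole (k : ℕ) (P H : Finset Pt) : Prop :=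
  H ⊆ P ∧ H.card = k ∧ ConvexPos (↑H : Set Pt) ∧
    ∀ p ∈ P, p ∉ H → p ∉ convexHull ℝ (↑H : Set Pt)

/-- The number of `k`-holes in `P`. -/
def numKHoles (k : ℕ) (P : Finset Pt) : ℕ :=
  Set.ncard {H : Finset Pt | IsKHole k P H}

/-- For an `ℓ`-divided set `P = A ∪ B`, an `ℓ`-divided 5-hole is a 5-hole in `A ∪ B`
containing points of both `A` and `B`. -/
def DividedFiveHole (A B H : Finset Pt) : Prop :=
  IsKHole 5 (A ∪ B) H ∧ (↑H ∩ ↑A : Set Pt).Nonempty ∧ (↑H ∩ ↑B : Set Pt).Nonempty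

/-- `x` is an extremal point of `P`: it lies on the boundary of the convex hull of `P`. -/
def OnHullBoundary (P : Finset Pt) (x : Pt) : Prop :=
  x ∈ frontier (convexHull ℝ (↑P : Set Pt))

/-- An `ℓ`-divided set `C = A ∪ B` is `ℓ`-critical if neither part is in convex position
and, for every extremal point `x` of `C`, one of the sets `(C \ {x}) ∩ A` and
`(C \ {x}) ∩ B` is in convex position. -/
def LCritical (A B : Finset Pt) : Prop :=
  ¬ ConvexPos (↑A : Set Pt) ∧ ¬ ConvexPos (↑B : Set Pt) ∧
    ∀ x ∈ A ∪ B, OnHullBoundary (A ∪ B) x →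
      (ConvexPos (↑(A.erase x) : Set Pt) ∨ ConvexPos (↑(B.erase x) : Set Pt))

/-- The closed wedge with apex `a` swept clockwise from the ray `a→p` to the ray `a→q`.
If the clockwise angle from `a→p` to `a→q` is at most `π` the wedge is convex, otherwise
it is the corresponding reflex region. -/
def Wedge (a p q : Pt) : Set Pt :=
  if cross2 (p - a) (q - a) ≤ 0 then
    {x | cross2 (p - a) (x - a) ≤ 0 ∧ 0 ≤ cross2 (q - a) (x - a)}
  else
    {x | cross2 (p - a) (x - a) ≤ 0 ∨ 0 ≤ cross2 (q - a) (x - a)}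

/-- `W` is an `a`-wedge of `A`: one of the closed regions into which the rays from `a`
through the other points of `A` partition the plane, i.e. a wedge spanned by two
points of `A \ {a}` that are angularly consecutive around `a` (no other point of `A`
lies in the wedge). -/
def IsAWedge (A : Finset Pt) (a : Pt) (W : Set Pt) : Prop :=
  ∃ p ∈ A.erase a, ∃ q ∈ A.erase a, p ≠ q ∧ W = Wedge a p q ∧
    (↑A : Set Pt) ∩ Wedge a p q ⊆ {a, p, q}

/-- The combinatorial data of the `a*`-wedges of an `ℓ`-divided set `P = A ∪ B`, where
`ℓ` is the vertical line `x = x0` and `A` lies to its left: `aStar` is the rightmost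
interior point `a*` of `A`; `lbl` is the clockwise cyclic labeling `a_0, a_1, …` of
`A \ {a*}` (period `|A| - 1`), so that the `k`-th wedge `W_k` is swept clockwise from
the ray through `lbl (k-1)` to the ray through `lbl k` and contains no other point
of `A`; the wedges `W_1, …, W_t` are exactly those meeting `ℓ`, in top-to-bottom
order along `ℓ`. -/
structure StarSetup (x0 : ℝ) (A : Finset Pt) where
  aStar : Pt
  lbl : ℕ → Pt
  t : ℕ
  aStar_mem : aStar ∈ A
  aStar_interior : aStar ∈ interior (convexHull ℝ (↑A : Set Pt))
  aStar_rightmost : ∀ p ∈ A, p ∈ interior (convexHull ℝ (↑A : Set Pt)) → p.1 ≤ aStar.1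
  lbl_mem : ∀ k, lbl k ∈ A.erase aStar
  lbl_periodic : ∀ k, lbl (k + (A.card - 1)) = lbl k
  lbl_bij : ∀ p ∈ A.erase aStar, ∃! k, k ∈ Finset.Icc 1 (A.card - 1) ∧ lbl k = p
  consec : ∀ k ∈ Finset.Icc 1 (A.card - 1),
    (↑A : Set Pt) ∩ Wedge aStar (lbl (k - 1)) (lbl k) ⊆ {aStar, lbl (k - 1), lbl k}
  t_pos : 1 ≤ t
  t_le : t ≤ A.card - 1
  inter_iff : ∀ k ∈ Finset.Icc 1 (A.card - 1),
    ((Wedge aStar (lbl (k - 1)) (lbl k)) ∩ {p : Pt | p.1 = x0}).Nonempty ↔ k ≤ t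
  ordered : ∀ k ∈ Finset.Icc 1 t, ∀ k' ∈ Finset.Icc 1 t, k < k' →
    ∀ p ∈ (Wedge aStar (lbl (k - 1)) (lbl k)) ∩ {q : Pt | q.1 = x0},
    ∀ p' ∈ (Wedge aStar (lbl (k' - 1)) (lbl k')) ∩ {q : Pt | q.1 = x0},
      p'.2 ≤ p.2

/-- The `k`-th `a*`-wedge `W_k`. -/
def StarSetup.W {x0 : ℝ} {A : Finset Pt} (S : StarSetup x0 A) (k : ℕ) : Set Pt :=
  Wedge S.aStar (S.lbl (k - 1)) (S.lbl k)

/-- `w_k`, the number of points of `B` in the `k`-th `a*`-wedge. -/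
def StarSetup.w {x0 : ℝ} {A : Finset Pt} (S : StarSetup x0 A) (B : Finset Pt) (k : ℕ) : ℕ :=
  Set.ncard ((↑B : Set Pt) ∩ S.W k)

/-- Orientation determinant of three points. -/
def DD (x y z : Pt) : ℝ := cross2 (y - x) (z - x)

theorem DD_def (x y z : Pt) :
    DD x y z = (y.1 - x.1) * (z.2 - x.2) - (y.2 - x.2) * (z.1 - x.1) := rfl

theorem DD_swap (x y z : Pt) : DD x z y = - DD x y z := by
  simp only [DD_def]; ring

theorem DD_swap' (x y z : Pt) : DD y x z = - DD x y z := by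
  simp only [DD_def]; ring

theorem DD_rot (x y z : Pt) : DD y z x = DD x y z := by
  simp only [DD_def]; ring

theorem DD_self1 (x y : Pt) : DD x x y = 0 := by
  simp only [DD_def]; ring

theorem DD_self2 (x y : Pt) : DD x y x = 0 := by
  simp only [DD_def]; ring

theorem DD_self3 (x y : Pt) : DD x y y = 0 := by
  simp only [DD_def]; ring

theorem DD_convex (u v : Pt) : Convex ℝ {z : Pt | 0 ≤ DD u v z} := by
  intro x hx y hy s t hs ht hst
  simp only [Set.mem_ofPred_eq, DD_def, Prod.fst_add, Prod.snd_add, Prod.smul_fst, Prod.smul_snd,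
    smul_eq_mul] at *
  have : t = 1 - s := by linarith
  subst this
  have h1 := mul_nonneg hs hx
  have h2 := mul_nonneg ht hy
  nlinarith

theorem DD_convex' (u v : Pt) : Convex ℝ {z : Pt | 0 < DD u v z} := by
  intro x hx y hy s t hs ht hst
  simp only [Set.mem_ofPred_eq, DD_def, Prod.fst_add, Prod.snd_add, Prod.smul_fst, Prod.smul_snd,
    smul_eq_mul] at *
  have : t = 1 - s := by linarith
  subst this
  rcases eq_or_lt_of_le hs with h | h
  · subst h; simpa using hy
  · have h1 := mul_pos h hx
    have h2 := mul_nonneg ht hy.le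
    nlinarith

theorem hull_le {S : Set Pt} {u v z : Pt} (h : ∀ x ∈ S, 0 ≤ DD u v x)
    (hz : z ∈ convexHull ℝ S) : 0 ≤ DD u v z :=
  convexHull_min (fun x hx => h x hx) (DD_convex u v) hz

theorem hull_lt {S : Set Pt} {u v z : Pt} (h : ∀ x ∈ S, 0 < DD u v x)
    (hz : z ∈ convexHull ℝ S) : 0 < DD u v z :=
  convexHull_min (fun x hx => h x hx) (DD_convex' u v) hz

theorem DD_pos_ne {x y z : Pt} (h : 0 < DD x y z) : x ≠ y ∧ x ≠ z ∧ y ≠ z := by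
  refine ⟨?_, ?_, ?_⟩ <;> rintro rfl
  · rw [DD_self1] at h; exact lt_irrefl _ h
  · rw [DD_self2] at h; exact lt_irrefl _ h
  · rw [DD_self3] at h; exact lt_irrefl _ h

/-- A point cut off by the chord `u v` is not in the hull of the rest. -/
theorem vertex_not_hull {S : Set Pt} {u v x : Pt} (hx : DD u v x < 0)
    (h : ∀ y ∈ S, y ≠ x → 0 ≤ DD u v y) : x ∉ convexHull ℝ (S \ {x}) := by
  intro hh
  have := hull_le (u := u) (v := v) (fun y hy => h y hy.1 hy.2) hh
  linarith

theorem five_hole (A B : Finset Pt) (x0 x1 x2 x3 x4 : Pt)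
    (m0 : x0 ∈ A ∪ B) (m1 : x1 ∈ A ∪ B) (m2 : x2 ∈ A ∪ B) (m3 : x3 ∈ A ∪ B) (m4 : x4 ∈ A ∪ B)
    (hA : ∃ x ∈ A, x = x0 ∨ x = x1 ∨ x = x2 ∨ x = x3 ∨ x = x4)
    (hB : ∃ x ∈ B, x = x0 ∨ x = x1 ∨ x = x2 ∨ x = x3 ∨ x = x4)
    (h012 : 0 < DD x0 x1 x2) (h013 : 0 < DD x0 x1 x3) (h014 : 0 < DD x0 x1 x4)
    (h023 : 0 < DD x0 x2 x3) (h024 : 0 < DD x0 x2 x4) (h034 : 0 < DD x0 x3 x4)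
    (h123 : 0 < DD x1 x2 x3) (h124 : 0 < DD x1 x2 x4) (h134 : 0 < DD x1 x3 x4)
    (h234 : 0 < DD x2 x3 x4)
    (he : ∀ z ∈ A ∪ B, z ≠ x0 → z ≠ x1 → z ≠ x2 → z ≠ x3 → z ≠ x4 →
      z ∉ convexHull ℝ ({x0, x1, x2, x3, x4} : Set Pt)) :
    ∃ H : Finset Pt, DividedFiveHole A B H := by
  classical
  have n01 := (DD_pos_ne h012).1
  have n02 := (DD_pos_ne h012).2.1
  have n12 := (DD_pos_ne h012).2.2
  have n03 := (DD_pos_ne h013).2.1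
  have n13 := (DD_pos_ne h013).2.2
  have n04 := (DD_pos_ne h014).2.1
  have n14 := (DD_pos_ne h014).2.2
  have n23 := (DD_pos_ne h234).1
  have n24 := (DD_pos_ne h234).2.1
  have n34 := (DD_pos_ne h234).2.2
  refine ⟨{x0, x1, x2, x3, x4}, ⟨?_, ?_, ?_, ?_⟩, ?_, ?_⟩
  · intro z hz
    simp only [Finset.mem_insert, Finset.mem_singleton] at hz
    rcases hz with rfl | rfl | rfl | rfl | rfl <;> assumption
  · rw [Finset.card_insert_of_notMem, Finset.card_insert_of_notMem, Finset.card_insert_of_notMem,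
      Finset.card_insert_of_notMem, Finset.card_singleton] <;> simp [*]
  · intro z hz
    simp only [Finset.coe_insert, Finset.coe_singleton, Set.mem_insert_iff,
      Set.mem_singleton_iff] at hz
    have key : ∀ u v : Pt, DD u v z < 0 → (∀ y, y = x0 ∨ y = x1 ∨ y = x2 ∨ y = x3 ∨ y = x4 →
        y ≠ z → 0 ≤ DD u v y) →
        z ∉ convexHull ℝ ((↑({x0, x1, x2, x3, x4} : Finset Pt) : Set Pt) \ {z}) := by
      intro u v h1 h2
      refine vertex_not_hull h1 ?_
      intro y hy hyz
      simp only [Finset.coe_insert, Finset.coe_singleton, Set.mem_insert_iff,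
        Set.mem_singleton_iff] at hy
      exact h2 y hy hyz
    simp only [DD_def] at h012 h013 h014 h023 h024 h034 h123 h124 h134 h234
    rcases hz with rfl | rfl | rfl | rfl | rfl
    · refine key x4 x1 ?_ ?_
      · simp only [DD_def]; linarith
      · rintro y (rfl | rfl | rfl | rfl | rfl) hy <;> simp only [DD_def] <;>
          first | exact absurd rfl hy | nlinarith
    · refine key x0 x2 ?_ ?_
      · simp only [DD_def]; linarith
      · rintro y (rfl | rfl | rfl | rfl | rfl) hy <;> simp only [DD_def] <;>
          first | exact absurd rfl hy | nlinarith
    · refine key x1 x3 ?_ ?_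
      · simp only [DD_def]; linarith
      · rintro y (rfl | rfl | rfl | rfl | rfl) hy <;> simp only [DD_def] <;>
          first | exact absurd rfl hy | nlinarith
    · refine key x2 x4 ?_ ?_
      · simp only [DD_def]; linarith
      · rintro y (rfl | rfl | rfl | rfl | rfl) hy <;> simp only [DD_def] <;>
          first | exact absurd rfl hy | nlinarith
    · refine key x3 x0 ?_ ?_
      · simp only [DD_def]; linarith
      · rintro y (rfl | rfl | rfl | rfl | rfl) hy <;> simp only [DD_def] <;>
          first | exact absurd rfl hy | nlinarith
  · intro z hz hzn
    simp only [Finset.mem_insert, Finset.mem_singleton, not_or] at hzn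
    have := he z hz hzn.1 hzn.2.1 hzn.2.2.1 hzn.2.2.2.1 hzn.2.2.2.2
    simpa using this
  · obtain ⟨x, hx, h⟩ := hA
    exact ⟨x, by simpa using h, hx⟩
  · obtain ⟨x, hx, h⟩ := hB
    exact ⟨x, by simpa using h, hx⟩

/-- Closed clockwise cone at `a` from `u` to `v`. -/
def cone (a u v z : Pt) : Prop := 0 ≤ DD a z u ∧ 0 ≤ DD a v z

theorem cone_split {a u v z : Pt} (k : Pt) (h : cone a u v z) : cone a u k z ∨ cone a k v z := by
  rcases le_total 0 (DD a k z) with h1 | h1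
  · exact Or.inl ⟨h.1, h1⟩
  · refine Or.inr ⟨?_, h.2⟩
    rw [DD_swap]; linarith

/-- Grassmann-Pluecker relation. -/
theorem plucker (a u v w z : Pt) :
    DD a u v * DD a w z - DD a u w * DD a v z + DD a u z * DD a v w = 0 := by
  simp only [DD_def]; ring

theorem area_add (t p q r : Pt) : DD t q r + DD p t r + DD p q t = DD p q r := by
  simp only [DD_def]; ring

theorem cone_mono_right {a u v w z : Pt} (h : cone a u v z) (huv : 0 < DD a v u)
    (hvw : 0 ≤ DD a w v) (huw : 0 ≤ DD a w u) : cone a u w z := by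
  refine ⟨h.1, ?_⟩
  have h1 := mul_nonneg hvw h.1
  have h2 := mul_nonneg huw h.2
  have h3 : DD a v u * DD a w z = DD a w v * DD a z u + DD a w u * DD a v z := by
    simp only [DD_def]; ring
  by_contra hc
  push Not at hc
  have := mul_neg_of_pos_of_neg huv hc
  linarith

theorem cone_mono_left {a u v w z : Pt} (h : cone a u v z) (huv : 0 < DD a v u)
    (hwu : 0 ≤ DD a u w) (hwv : 0 ≤ DD a v w) : cone a w v z := by
  refine ⟨?_, h.2⟩
  have h1 := mul_nonneg hwu h.2
  have h2 := mul_nonneg hwv h.1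
  have h3 : DD a v u * DD a z w = DD a u w * DD a v z + DD a v w * DD a z u := by
    simp only [DD_def]; ring
  by_contra hc
  push Not at hc
  have := mul_neg_of_pos_of_neg huv hc
  linarith


/-! ### A small certificate checker for orientation reasoning -/

/-- Code of the literal saying that the triple `x y z` is positively oriented. -/
def litc (x y z : ℕ) : ℕ :=
  if x < y then
    if y < z then 2 * ((x * 16 + y) * 16 + z)
    else if x < z then 2 * ((x * 16 + z) * 16 + y) + 1
    else 2 * ((z * 16 + x) * 16 + y)
  else
    if x < z then 2 * ((y * 16 + x) * 16 + z) + 1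
    else if y < z then 2 * ((y * 16 + z) * 16 + x)
    else 2 * ((z * 16 + y) * 16 + x) + 1

def mk3 (x y z : ℕ) : ℕ := litc (x % 16) (y % 16) (z % 16)

def negl (L : ℕ) : ℕ := if L % 2 = 0 then L + 1 else L - 1

/-- Semantics of literal codes. -/
def holdsL (f : ℕ → Pt) (L : ℕ) : Prop :=
  if L % 2 = 0 then 0 < DD (f (L / 512)) (f (L / 32 % 16)) (f (L / 2 % 16))
  else DD (f (L / 512)) (f (L / 32 % 16)) (f (L / 2 % 16)) < 0

theorem holds_even (f : ℕ → Pt) {x y z : ℕ} (hy : y < 16) (hz : z < 16) :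
    holdsL f (2 * ((x * 16 + y) * 16 + z)) ↔ 0 < DD (f x) (f y) (f z) := by
  unfold holdsL
  rw [if_pos (by omega)]
  have h1 : 2 * ((x * 16 + y) * 16 + z) / 512 = x := by omega
  have h2 : 2 * ((x * 16 + y) * 16 + z) / 32 % 16 = y := by omega
  have h3 : 2 * ((x * 16 + y) * 16 + z) / 2 % 16 = z := by omega
  rw [h1, h2, h3]

theorem holds_odd (f : ℕ → Pt) {x y z : ℕ} (hy : y < 16) (hz : z < 16) :
    holdsL f (2 * ((x * 16 + y) * 16 + z) + 1) ↔ DD (f x) (f y) (f z) < 0 := by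
  unfold holdsL
  rw [if_neg (by omega)]
  have h1 : (2 * ((x * 16 + y) * 16 + z) + 1) / 512 = x := by omega
  have h2 : (2 * ((x * 16 + y) * 16 + z) + 1) / 32 % 16 = y := by omega
  have h3 : (2 * ((x * 16 + y) * 16 + z) + 1) / 2 % 16 = z := by omega
  rw [h1, h2, h3]

theorem holds_litc (f : ℕ → Pt) {x y z : ℕ} (hx : x < 16) (hy : y < 16) (hz : z < 16) :
    holdsL f (litc x y z) ↔ 0 < DD (f x) (f y) (f z) := by
  unfold litc
  split_ifs
  · rw [holds_even f hy hz]
  · rw [holds_odd f hz hy, DD_swap]; constructor <;> intro h <;> linarith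
  · rw [holds_even f hx hy, ← DD_rot (f z)]
  · rw [holds_odd f hx hz, DD_swap']; constructor <;> intro h <;> linarith
  · rw [holds_even f hz hx, DD_rot (f x)]
  · have e : DD (f z) (f y) (f x) = - DD (f x) (f y) (f z) := by simp only [DD_def]; ring
    rw [holds_odd f hy hx, e]; constructor <;> intro h <;> linarith

theorem holds_mk3 {f : ℕ → Pt} (hf : ∀ n, f (n % 16) = f n) (x y z : ℕ) :
    holdsL f (mk3 x y z) ↔ 0 < DD (f x) (f y) (f z) := by
  unfold mk3
  rw [holds_litc f (Nat.mod_lt _ (by norm_num)) (Nat.mod_lt _ (by norm_num))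
    (Nat.mod_lt _ (by norm_num)), hf, hf, hf]

/-- Configuration of a certificate. -/
structure Cfg where
  names : List ℕ
  R : List ℕ
  fans : List (List ℕ)
  ext : List (List ℕ)

def Aix : List ℕ := [0, 1, 4, 7, 9]
def Bix : List ℕ := [2, 3, 5, 6, 8]

/-- Semantic assumptions on a configuration. -/
structure Sem (K : Cfg) (A B : Finset Pt) (f : ℕ → Pt) : Prop where
  per : ∀ n, f (n % 16) = f n
  ne : ∀ x ∈ K.names, ∀ y ∈ K.names, ∀ z ∈ K.names, x ≠ y → x ≠ z → y ≠ z →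
    DD (f x) (f y) (f z) ≠ 0
  memA : ∀ x ∈ K.names, x ∈ Aix → f x ∈ A
  memB : ∀ x ∈ K.names, x ∈ Bix → f x ∈ B
  inner : ∀ x ∈ K.R, ∀ u ∈ A, ∀ v ∈ A, ∀ w ∈ A,
    ¬ (0 < DD u v (f x) ∧ 0 < DD v w (f x) ∧ 0 < DD w u (f x))
  gap : ∀ l ∈ K.fans, l.IsChain (fun k k' => ∀ z ∈ A ∪ B, cone (f 0) (f k) (f k') z →
    z = f 0 ∨ z = f k ∨ z = f k')
  nohole : ¬ ∃ H : Finset Pt, DividedFiveHole A B H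
  ext : ∀ l ∈ K.ext, ∃ L ∈ l, ¬ holdsL f L

def validL (K : Cfg) (L : ℕ) : Bool :=
  K.names.contains (L / 512) && K.names.contains (L / 32 % 16) && K.names.contains (L / 2 % 16) &&
    (L / 512) != (L / 32 % 16) && (L / 512) != (L / 2 % 16) && (L / 32 % 16) != (L / 2 % 16)

def digs : ℕ → ℕ → List ℕ
  | 0, _ => []
  | n + 1, c => (c % 16) :: digs n (c / 16)

def inA (K : Cfg) (x : ℕ) : Bool := K.names.contains x && Aix.contains x
def inB (K : Cfg) (x : ℕ) : Bool := K.names.contains x && Bix.contains x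

/-- vertex number `e` of a pentagon -/
def pick (e h0 h1 h2 h3 h4 : ℕ) : ℕ :=
  if e = 0 then h0 else if e = 1 then h1 else if e = 2 then h2 else if e = 3 then h3 else h4

def edges (h0 h1 h2 h3 h4 : ℕ) : List ℕ → List ℕ → List ℕ
  | [], _ => []
  | x :: xs, [] => mk3 h1 h0 x :: edges h0 h1 h2 h3 h4 xs []
  | x :: xs, e :: es =>
      mk3 (pick ((e + 1) % 5) h0 h1 h2 h3 h4) (pick (e % 5) h0 h1 h2 h3 h4) x ::
        edges h0 h1 h2 h3 h4 xs es

def holeLits (seg : List ℕ) (lo hi h0 h1 h2 h3 h4 : ℕ) (es : List ℕ) : List ℕ :=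
  [mk3 h0 h1 h2, mk3 h0 h1 h3, mk3 h0 h1 h4, mk3 h0 h2 h3, mk3 h0 h2 h4, mk3 h0 h3 h4,
    mk3 h1 h2 h3, mk3 h1 h2 h4, mk3 h1 h3 h4, mk3 h2 h3 h4] ++
  (([h0, h1, h2, h3, h4].filter (fun h => h != 0 && h != lo)).map (fun h => mk3 0 h lo)) ++
  (([h0, h1, h2, h3, h4].filter (fun h => h != 0 && h != hi)).map (fun h => mk3 0 hi h)) ++
  edges h0 h1 h2 h3 h4 (seg.filter (fun x => !([h0, h1, h2, h3, h4].contains x))) es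

def segOf (fan : List ℕ) (lo hi : ℕ) : List ℕ :=
  (fan.drop (fan.idxOf lo)).take (fan.idxOf hi + 1 - fan.idxOf lo)

def holeOK (K : Cfg) (seg : List ℕ) (lo hi h0 h1 h2 h3 h4 : ℕ) : Bool :=
  decide (2 ≤ seg.length) && (seg.head? == some lo) && (seg.getLast? == some hi) &&
  [h0, h1, h2, h3, h4].contains lo && [h0, h1, h2, h3, h4].contains hi &&
  lo != 0 && hi != 0 && lo != hi &&
  [h0, h1, h2, h3, h4].all (fun h => inA K h || inB K h) &&
  [h0, h1, h2, h3, h4].any (fun h => inA K h) &&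
  [h0, h1, h2, h3, h4].any (fun h => inB K h)

/-- Decode a step into a nogood. `none` means an invalid step. -/
def nogood (K : Cfg) (c : ℕ) : Option (List ℕ) :=
  match digs 20 c with
  | k :: a0 :: a1 :: a2 :: a3 :: a4 :: a5 :: a6 :: a7 :: es =>
    if k = 4 then some [mk3 a0 a2 a3, mk3 a1 a0 a3, mk3 a1 a2 a0, mk3 a3 a2 a1]
    else if k = 5 then
      some [mk3 a0 a1 a2, mk3 a0 a1 a3, mk3 a0 a1 a4, mk3 a0 a2 a3, mk3 a0 a3 a4, mk3 a0 a4 a2]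
    else if k = 7 then
      if K.R.contains a0 && inA K a1 && inA K a2 && inA K a3 then
        some [mk3 a1 a2 a0, mk3 a2 a3 a0, mk3 a3 a1 a0] else none
    else if k = 6 then
      match K.fans[a0]? with
      | none => none
      | some fan =>
        if holeOK K (segOf fan a1 a2) a1 a2 a3 a4 a5 a6 a7 then
          some (holeLits (segOf fan a1 a2) a1 a2 a3 a4 a5 a6 a7 es)
        else none
    else K.ext[a0]?
  | _ => none

def stepM (K : Cfg) (M c : ℕ) : Option ℕ :=
  match nogood K c with
  | none => some M
  | some l =>
    match l.filter (fun L => !(M.testBit L)) with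
    | [] => none
    | L :: rest =>
      if rest.all (fun L' => L' == L) && validL K L then some (M ||| 2 ^ (negl L)) else some M

def runM (K : Cfg) (M : ℕ) : List ℕ → Option ℕ
  | [] => some M
  | c :: cs => match stepM K M c with
    | none => none
    | some M' => runM K M' cs

inductive Tr where
  | l (s : List ℕ) : Tr
  | n (s : List ℕ) (L : ℕ) (t1 t2 : Tr) : Tr

def chk (K : Cfg) : ℕ → Tr → Bool
  | M, .l s => (runM K M s).isNone
  | M, .n s L t1 t2 => match runM K M s with
    | none => true
    | some M' => validL K L && chk K (M' ||| 2 ^ L) t1 && chk K (M' ||| 2 ^ (negl L)) t2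

def maskOf : List ℕ → ℕ
  | [] => 0
  | L :: l => maskOf l ||| 2 ^ L

def okM (f : ℕ → Pt) (M : ℕ) : Prop := ∀ L, M.testBit L = true → holdsL f L

theorem okM_insert {f : ℕ → Pt} {M L : ℕ} (h : okM f M) (hL : holdsL f L) :
    okM f (M ||| 2 ^ L) := by
  intro L' h'
  rw [Nat.testBit_or, Nat.testBit_two_pow, Bool.or_eq_true, decide_eq_true_eq] at h'
  rcases h' with h' | rfl
  · exact h _ h'
  · exact hL

theorem okM_maskOf {f : ℕ → Pt} : ∀ l : List ℕ, (∀ L ∈ l, holdsL f L) → okM f (maskOf l)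
  | [], _ => by intro L hL; simp [maskOf] at hL
  | L :: l, h => okM_insert (okM_maskOf l (fun x hx => h x (List.mem_cons_of_mem _ hx)))
      (h L List.mem_cons_self)

theorem validL_or {K : Cfg} {A B : Finset Pt} {f : ℕ → Pt} (S : Sem K A B f) {L : ℕ}
    (h : validL K L = true) (hL : ¬ holdsL f L) : holdsL f (negl L) := by
  simp only [validL, Bool.and_eq_true, List.contains_iff_mem, bne_iff_ne] at h
  obtain ⟨⟨⟨⟨⟨h1, h2⟩, h3⟩, h4⟩, h5⟩, h6⟩ := h
  have hne := S.ne _ h1 _ h2 _ h3 h4 h5 h6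
  unfold holdsL at hL ⊢
  unfold negl
  by_cases hp : L % 2 = 0
  · rw [if_pos hp] at hL ⊢
    rw [if_neg (by omega)]
    have e1 : (L + 1) / 512 = L / 512 := by omega
    have e2 : (L + 1) / 32 = L / 32 := by omega
    have e3 : (L + 1) / 2 = L / 2 := by omega
    rw [e1, e2, e3]
    exact lt_of_le_of_ne (not_lt.1 hL) hne
  · rw [if_neg hp] at hL ⊢
    rw [if_pos (by omega)]
    have e1 : (L - 1) / 512 = L / 512 := by omega
    have e2 : (L - 1) / 32 = L / 32 := by omega
    have e3 : (L - 1) / 2 = L / 2 := by omega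
    rw [e1, e2, e3]
    exact lt_of_le_of_ne (not_lt.1 hL) hne.symm

theorem fan_cover {P : Finset Pt} {f : ℕ → Pt} {z : Pt} (hz : z ∈ P) : ∀ (l : List ℕ) (lo k : ℕ),
    (lo :: k :: l).IsChain (fun k k' => ∀ z ∈ P, cone (f 0) (f k) (f k') z →
      z = f 0 ∨ z = f k ∨ z = f k') →
    ∀ hi, (lo :: k :: l).getLast? = some hi → cone (f 0) (f lo) (f hi) z →
    z = f 0 ∨ ∃ x ∈ lo :: k :: l, z = f x
  | [], lo, k, hc, hi, hl, hcone => by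
      simp at hl
      subst hl
      rw [List.isChain_cons_cons] at hc
      rcases hc.1 z hz hcone with h | h | h
      · exact Or.inl h
      · exact Or.inr ⟨lo, by simp, h⟩
      · exact Or.inr ⟨k, by simp, h⟩
  | m :: l, lo, k, hc, hi, hl, hcone => by
      rw [List.isChain_cons_cons] at hc
      rcases cone_split (f k) hcone with h | h
      · rcases hc.1 z hz h with h | h | h
        · exact Or.inl h
        · exact Or.inr ⟨lo, by simp, h⟩
        · exact Or.inr ⟨k, by simp, h⟩
      · rcases fan_cover hz l k m hc.2 hi (by simpa using hl) h with h | ⟨x, hx, h⟩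
        · exact Or.inl h
        · exact Or.inr ⟨x, List.mem_cons_of_mem _ hx, h⟩

theorem edges_sound {f : ℕ → Pt} (hf : ∀ n, f (n % 16) = f n) {h0 h1 h2 h3 h4 : ℕ} :
    ∀ (xs es : List ℕ), (∀ L ∈ edges h0 h1 h2 h3 h4 xs es, holdsL f L) → ∀ x ∈ xs,
    DD (f h0) (f h1) (f x) < 0 ∨ DD (f h1) (f h2) (f x) < 0 ∨ DD (f h2) (f h3) (f x) < 0 ∨
      DD (f h3) (f h4) (f x) < 0 ∨ DD (f h4) (f h0) (f x) < 0
  | [], _, _, x, hx => by simp at hx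
  | y :: ys, [], h, x, hx => by
      rw [edges] at h
      rcases List.mem_cons.1 hx with rfl | hx
      · have := (holds_mk3 hf _ _ _).1 (h _ List.mem_cons_self)
        rw [DD_swap'] at this
        left; linarith
      · exact edges_sound hf ys [] (fun L hL => h L (List.mem_cons_of_mem _ hL)) x hx
  | y :: ys, e :: es, h, x, hx => by
      rw [edges] at h
      rcases List.mem_cons.1 hx with rfl | hx
      · have := (holds_mk3 hf _ _ _).1 (h _ List.mem_cons_self)
        rw [DD_swap'] at this
        have he : e % 5 = 0 ∧ (e + 1) % 5 = 1 ∨ e % 5 = 1 ∧ (e + 1) % 5 = 2 ∨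
          e % 5 = 2 ∧ (e + 1) % 5 = 3 ∨ e % 5 = 3 ∧ (e + 1) % 5 = 4 ∨
          e % 5 = 4 ∧ (e + 1) % 5 = 0 := by omega
        rcases he with ⟨e1, e2⟩ | ⟨e1, e2⟩ | ⟨e1, e2⟩ | ⟨e1, e2⟩ | ⟨e1, e2⟩ <;>
          rw [e1, e2] at this <;> simp [pick] at this <;> simp [this]
      · exact edges_sound hf ys es (fun L hL => h L (List.mem_cons_of_mem _ hL)) x hx

theorem hole_sound {K : Cfg} {A B : Finset Pt} {f : ℕ → Pt} (S : Sem K A B f)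
    {seg : List ℕ} {lo hi h0 h1 h2 h3 h4 : ℕ} {es : List ℕ}
    (hseg : seg.IsChain (fun k k' => ∀ z ∈ A ∪ B, cone (f 0) (f k) (f k') z →
      z = f 0 ∨ z = f k ∨ z = f k'))
    (hok : holeOK K seg lo hi h0 h1 h2 h3 h4 = true)
    (hl : ∀ L ∈ holeLits seg lo hi h0 h1 h2 h3 h4 es, holdsL f L) : False := by
  have hf := S.per
  simp only [holeOK, Bool.and_eq_true, decide_eq_true_eq, beq_iff_eq, List.contains_iff_mem,
    bne_iff_ne, List.all_eq_true, List.any_eq_true, Bool.or_eq_true] at hok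
  obtain ⟨⟨⟨⟨⟨⟨⟨⟨⟨⟨k1, k2⟩, k3⟩, k4⟩, k5⟩, k6⟩, k7⟩, k8⟩, k9⟩, k10⟩, k11⟩ := hok
  simp only [holeLits, List.forall_mem_append] at hl
  obtain ⟨⟨⟨l1, l2⟩, l3⟩, l4⟩ := hl
  simp only [List.forall_mem_cons, holds_mk3 hf] at l1
  obtain ⟨o1, o2, o3, o4, o5, o6, o7, o8, o9, o10, -⟩ := l1
  have mA : ∀ h, inA K h = true → f h ∈ A := by
    intro h hh
    simp only [inA, Bool.and_eq_true, List.contains_iff_mem] at hh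
    exact S.memA h hh.1 hh.2
  have mB : ∀ h, inB K h = true → f h ∈ B := by
    intro h hh
    simp only [inB, Bool.and_eq_true, List.contains_iff_mem] at hh
    exact S.memB h hh.1 hh.2
  have mAB : ∀ h ∈ [h0, h1, h2, h3, h4], f h ∈ A ∪ B := by
    intro h hh
    rcases k9 h hh with h' | h'
    · exact Finset.mem_union_left _ (mA _ h')
    · exact Finset.mem_union_right _ (mB _ h')
  have c1 : ∀ h ∈ [h0, h1, h2, h3, h4], h ≠ 0 → h ≠ lo → 0 < DD (f 0) (f h) (f lo) := by
    intro h hh ha hb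
    refine (holds_mk3 hf _ _ _).1 (l2 _ (List.mem_map.2 ⟨h, List.mem_filter.2 ⟨hh, ?_⟩, rfl⟩))
    simp [ha, hb]
  have c2 : ∀ h ∈ [h0, h1, h2, h3, h4], h ≠ 0 → h ≠ hi → 0 < DD (f 0) (f hi) (f h) := by
    intro h hh ha hb
    refine (holds_mk3 hf _ _ _).1 (l3 _ (List.mem_map.2 ⟨h, List.mem_filter.2 ⟨hh, ?_⟩, rfl⟩))
    simp [ha, hb]
  refine S.nohole (five_hole A B (f h0) (f h1) (f h2) (f h3) (f h4) (mAB _ (by simp))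
    (mAB _ (by simp)) (mAB _ (by simp)) (mAB _ (by simp)) (mAB _ (by simp)) ?_ ?_
    o1 o2 o3 o4 o5 o6 o7 o8 o9 o10 ?_)
  · obtain ⟨h, hh, hA⟩ := k10
    refine ⟨f h, mA h hA, ?_⟩
    simp only [List.mem_cons, List.not_mem_nil, or_false] at hh
    rcases hh with rfl | rfl | rfl | rfl | rfl <;> simp
  · obtain ⟨h, hh, hA⟩ := k11
    refine ⟨f h, mB h hA, ?_⟩
    simp only [List.mem_cons, List.not_mem_nil, or_false] at hh
    rcases hh with rfl | rfl | rfl | rfl | rfl <;> simp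
  · intro z hz z0 z1 z2 z3 z4 hhull
    have hset : ∀ y ∈ ({f h0, f h1, f h2, f h3, f h4} : Set Pt),
        ∃ h ∈ [h0, h1, h2, h3, h4], y = f h := by
      rintro y (rfl | rfl | rfl | rfl | rfl)
      exacts [⟨h0, by simp, rfl⟩, ⟨h1, by simp, rfl⟩, ⟨h2, by simp, rfl⟩, ⟨h3, by simp, rfl⟩,
        ⟨h4, by simp, rfl⟩]
    have hnz : ∀ h ∈ [h0, h1, h2, h3, h4], z ≠ f h := by
      intro h hh
      simp only [List.mem_cons, List.not_mem_nil, or_false] at hh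
      rcases hh with rfl | rfl | rfl | rfl | rfl <;> assumption
    have hc : cone (f 0) (f lo) (f hi) z := by
      constructor
      · have : 0 ≤ DD (f lo) (f 0) z := by
          refine hull_le ?_ hhull
          intro y hy
          obtain ⟨h, hh, rfl⟩ := hset y hy
          by_cases ha : h = 0
          · subst ha; rw [DD_self3]
          by_cases hb : h = lo
          · subst hb; rw [DD_self2]
          · have := c1 h hh ha hb
            have e := DD_rot (f 0) (f h) (f lo)
            have e2 := DD_rot (f lo) (f 0) (f h)
            linarith
        have e := DD_rot (f lo) (f 0) z
        linarith
      · refine hull_le ?_ hhull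
        intro y hy
        obtain ⟨h, hh, rfl⟩ := hset y hy
        by_cases ha : h = 0
        · subst ha; rw [DD_self2]
        by_cases hb : h = hi
        · subst hb; rw [DD_self3]
        · exact (c2 h hh ha hb).le
    obtain ⟨e1, e2, seg', rfl⟩ : ∃ a b l, seg = a :: b :: l := by
      match seg, k1 with
      | a :: b :: l, _ => exact ⟨a, b, l, rfl⟩
    simp only [List.head?_cons, Option.some.injEq] at k2
    subst k2
    rcases fan_cover hz seg' _ _ hseg hi k3 hc with h | ⟨x, hx, h⟩
    · by_cases h00 : 0 ∈ [h0, h1, h2, h3, h4]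
      · exact hnz 0 h00 h
      · have : 0 < DD (f 0) (f 0 + f hi - f e1) z := by
          refine hull_lt ?_ hhull
          intro y hy
          obtain ⟨h, hh, rfl⟩ := hset y hy
          have h0' : h ≠ 0 := fun e => h00 (e ▸ hh)
          have e : DD (f 0) (f 0 + f hi - f e1) (f h) =
              DD (f 0) (f hi) (f h) + DD (f 0) (f h) (f e1) := by
            simp only [DD_def, Prod.fst_add, Prod.fst_sub, Prod.snd_add, Prod.snd_sub]; ring
          rw [e]
          by_cases hb : h = e1
          · subst hb
            rw [DD_self3]
            have := c2 h hh h0' k8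
            linarith
          · have t1 := c1 h hh h0' hb
            by_cases hb' : h = hi
            · subst hb'; rw [DD_self3]; linarith
            · have := c2 h hh h0' hb'
              linarith
        rw [h, DD_self2] at this
        exact lt_irrefl _ this
    · by_cases hxH : x ∈ [h0, h1, h2, h3, h4]
      · exact hnz x hxH h
      · have hx' := edges_sound hf _ _ l4 x (List.mem_filter.2 ⟨hx, by
          simp only [Bool.not_eq_true', ← Bool.not_eq_true, List.contains_iff_mem]
          exact hxH⟩)
        rw [← h] at hx'
        have key : ∀ u v : Pt, (∀ y ∈ ({f h0, f h1, f h2, f h3, f h4} : Set Pt), 0 ≤ DD u v y) →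
            ¬ DD u v z < 0 := fun u v huv hlt => by
          have := hull_le huv hhull
          linarith
        rcases hx' with hx' | hx' | hx' | hx' | hx' <;> refine key _ _ ?_ hx' <;>
          simp only [DD_def] at o1 o2 o3 o4 o5 o6 o7 o8 o9 o10 ⊢ <;>
          rintro y (rfl | rfl | rfl | rfl | rfl) <;> nlinarith

theorem segOf_chain {r : ℕ → ℕ → Prop} {fan : List ℕ} (h : fan.IsChain r) (lo hi : ℕ) :
    (segOf fan lo hi).IsChain r := by
  unfold segOf
  exact (h.drop _).take _

theorem nogood_sound {K : Cfg} {A B : Finset Pt} {f : ℕ → Pt} (S : Sem K A B f) {c : ℕ}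
    {l : List ℕ} (h : nogood K c = some l) : ∃ L ∈ l, ¬ holdsL f L := by
  have hf := S.per
  by_contra hcon
  push Not at hcon
  have mA : ∀ h, inA K h = true → f h ∈ A := by
    intro h hh
    simp only [inA, Bool.and_eq_true, List.contains_iff_mem] at hh
    exact S.memA h hh.1 hh.2
  unfold nogood at h
  split at h
  · split_ifs at h with h4 h5 h7 h8 h6
    · simp only [Option.some.injEq] at h
      subst h
      simp only [List.forall_mem_cons, holds_mk3 hf] at hcon
      obtain ⟨c1, c2, c3, c4, -⟩ := hcon
      simp only [DD_def] at *
      nlinarith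
    · simp only [Option.some.injEq] at h
      subst h
      simp only [List.forall_mem_cons, holds_mk3 hf] at hcon
      obtain ⟨c1, c2, c3, c4, c5, c6, -⟩ := hcon
      rename_i a0 a1 a2 a3 a4 _ _ _ _ _
      have := plucker (f a0) (f a1) (f a2) (f a3) (f a4)
      rw [DD_swap (f a0) (f a4) (f a2)] at this
      have t1 := mul_pos c1 c5
      have t2 := mul_pos c2 c6
      have t3 := mul_pos c3 c4
      linarith
    · simp only [Option.some.injEq] at h
      subst h
      simp only [List.forall_mem_cons, holds_mk3 hf] at hcon
      obtain ⟨c1, c2, c3, -⟩ := hcon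
      simp only [Bool.and_eq_true, List.contains_iff_mem] at h8
      exact S.inner _ h8.1.1.1 _ (mA _ h8.1.1.2) _ (mA _ h8.1.2) _ (mA _ h8.2) ⟨c1, c2, c3⟩
    · split at h
      · cases h
      · rename_i fan hfan
        split_ifs at h with hok
        simp only [Option.some.injEq] at h
        subst h
        exact hole_sound S (segOf_chain (S.gap _ (List.mem_of_getElem? hfan)) _ _) hok hcon
    · obtain ⟨L, h1, h2⟩ := S.ext _ (List.mem_of_getElem? h)
      exact h2 (hcon L h1)
  · cases h

theorem stepM_sound {K : Cfg} {A B : Finset Pt} {f : ℕ → Pt} (S : Sem K A B f) {M c : ℕ}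
    (hM : okM f M) : ∃ M', stepM K M c = some M' ∧ okM f M' := by
  unfold stepM
  split
  · exact ⟨M, rfl, hM⟩
  · rename_i l hl
    obtain ⟨L, hL, hn⟩ := nogood_sound S hl
    have hmem : L ∈ l.filter (fun L => !(M.testBit L)) := by
      refine List.mem_filter.2 ⟨hL, ?_⟩
      by_contra hc
      simp only [Bool.not_eq_true', Bool.not_eq_false] at hc
      exact hn (hM L hc)
    split
    · rename_i he
      rw [he] at hmem
      cases hmem
    · rename_i L0 rest he
      rw [he] at hmem
      split_ifs with hif
      · simp only [Bool.and_eq_true, List.all_eq_true, beq_iff_eq] at hif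
        refine ⟨_, rfl, okM_insert hM (validL_or S hif.2 ?_)⟩
        rcases List.mem_cons.1 hmem with rfl | hr
        · exact hn
        · rw [← hif.1 L hr]; exact hn
      · exact ⟨M, rfl, hM⟩

theorem runM_sound {K : Cfg} {A B : Finset Pt} {f : ℕ → Pt} (S : Sem K A B f) :
    ∀ (cs : List ℕ) (M : ℕ), okM f M → ∃ M', runM K M cs = some M' ∧ okM f M'
  | [], M, hM => ⟨M, rfl, hM⟩
  | c :: cs, M, hM => by
      obtain ⟨M1, h1, h2⟩ := stepM_sound S (c := c) hM
      rw [runM, h1]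
      exact runM_sound S cs M1 h2

theorem chk_sound {K : Cfg} {A B : Finset Pt} {f : ℕ → Pt} (S : Sem K A B f) :
    ∀ (t : Tr) (M : ℕ), okM f M → chk K M t = true → False
  | .l s, M, hM, h => by
      obtain ⟨M1, h1, h2⟩ := runM_sound S s M hM
      rw [chk, h1] at h
      cases h
  | .n s L t1 t2, M, hM, h => by
      obtain ⟨M1, h1, h2⟩ := runM_sound S s M hM
      rw [chk, h1] at h
      simp only [Bool.and_eq_true] at h
      by_cases hL : holdsL f L
      · exact chk_sound S t1 _ (okM_insert h2 hL) h.1.2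
      · exact chk_sound S t2 _ (okM_insert h2 (validL_or S h.1.1 hL)) h.2

theorem chk_main {K : Cfg} {A B : Finset Pt} {f : ℕ → Pt} (S : Sem K A B f) (ini : List ℕ)
    (t : Tr) (hini : ∀ L ∈ ini, holdsL f L) (h : chk K (maskOf ini) t = true) : False :=
  chk_sound S t _ (okM_maskOf ini hini) h


/-- Slope of `u` seen from `a`. -/
noncomputable def sl (a u : Pt) : ℝ := (u.2 - a.2) / (u.1 - a.1)

theorem sl_lt {a u v : Pt} (hu : a.1 < u.1) (hv : a.1 < v.1) :
    0 < DD a v u ↔ sl a v < sl a u := by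
  unfold sl
  rw [div_lt_div_iff₀ (by linarith) (by linarith), DD_def]
  constructor <;> intro h <;> nlinarith

theorem exists_I (P : Finset Pt) : ∃ I : Pt, ∀ x ∈ P, ∀ y ∈ P, x.1 < y.1 → 0 < DD I x y := by
  classical
  have h : ∀ w : Pt × Pt, ∃ M0 : ℝ, ∀ M, M0 ≤ M → w.1.1 < w.2.1 → 0 < DD (0, M) w.1 w.2 := by
    intro w
    by_cases hw : w.1.1 < w.2.1
    · refine ⟨(1 - (w.1.1 * w.2.2 - w.1.2 * w.2.1)) / (w.2.1 - w.1.1), fun M hM _ => ?_⟩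
      rw [div_le_iff₀ (by linarith)] at hM
      simp only [DD_def]
      nlinarith
    · exact ⟨0, fun M _ h => absurd h hw⟩
  choose g hg using h
  obtain ⟨M, hM⟩ := ((P ×ˢ P).image g).exists_le
  refine ⟨(0, M), fun x hx y hy hxy => hg (x, y) M ?_ hxy⟩
  exact hM _ (Finset.mem_image_of_mem g (Finset.mk_mem_product hx hy))

/-- The common geometric situation: two consecutive wedges at `a`, from `p` to `c` and from
`c` to `q`, each with two points of `B`. -/
structure Core (x0 : ℝ) (A B : Finset Pt) (a p c q b1 b2 b3 b4 : Pt) : Prop where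
  hA : ∀ x ∈ A, x.1 < x0
  hB : ∀ x ∈ B, x0 < x.1
  gen : ∀ x ∈ A ∪ B, ∀ y ∈ A ∪ B, ∀ z ∈ A ∪ B, x ≠ y → x ≠ z → y ≠ z → DD x y z ≠ 0
  inj : ∀ x ∈ A ∪ B, ∀ y ∈ A ∪ B, x.1 = y.1 → x = y
  ma : a ∈ A
  mp : p ∈ A
  mc : c ∈ A
  mq : q ∈ A
  m1 : b1 ∈ B
  m2 : b2 ∈ B
  m3 : b3 ∈ B
  m4 : b4 ∈ B
  rc : a.1 < c.1
  inner : ∀ x ∈ A, a.1 < x.1 → ∀ u ∈ A, ∀ v ∈ A, ∀ w ∈ A,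
    ¬ (0 < DD u v x ∧ 0 < DD v w x ∧ 0 < DD w u x)
  pb1 : 0 < DD a b1 p
  pb2 : 0 < DD a b2 p
  pc : 0 < DD a c p
  b12 : 0 < DD a b2 b1
  b1c : 0 < DD a c b1
  b2c : 0 < DD a c b2
  cb3 : 0 < DD a b3 c
  cb4 : 0 < DD a b4 c
  cq : 0 < DD a q c
  b34 : 0 < DD a b4 b3
  b3q : 0 < DD a q b3
  b4q : 0 < DD a q b4
  gA1 : ∀ z ∈ A, cone a p c z → z = a ∨ z = p ∨ z = c
  gA2 : ∀ z ∈ A, cone a c q z → z = a ∨ z = c ∨ z = q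
  gB1 : ∀ z ∈ B, cone a p c z → z = b1 ∨ z = b2
  gB2 : ∀ z ∈ B, cone a c q z → z = b3 ∨ z = b4
  nohole : ¬ ∃ H : Finset Pt, DividedFiveHole A B H

theorem not_le_swap {a x y : Pt} (h : 0 < DD a x y) : ¬ 0 ≤ DD a y x := by
  rw [DD_swap]; intro h'; linarith

theorem gap3 {P : Finset Pt} {a u x y v : Pt}
    (h : ∀ z ∈ P, cone a u v z → z = a ∨ z = u ∨ z = v ∨ z = x ∨ z = y)
    (ux : 0 < DD a x u) (uy : 0 < DD a y u) (uv : 0 < DD a v u) (xy : 0 < DD a y x)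
    (xv : 0 < DD a v x) (yv : 0 < DD a v y) :
    (∀ z ∈ P, cone a u x z → z = a ∨ z = u ∨ z = x) ∧
    (∀ z ∈ P, cone a x y z → z = a ∨ z = x ∨ z = y) ∧
    (∀ z ∈ P, cone a y v z → z = a ∨ z = y ∨ z = v) := by
  refine ⟨fun z hz hc => ?_, fun z hz hc => ?_, fun z hz hc => ?_⟩
  · have h1 := cone_mono_right hc ux xv.le uv.le
    rcases h z hz h1 with r | r | r | r | r
    · exact Or.inl r
    · exact Or.inr (Or.inl r)
    · subst r; exact absurd hc.2 (not_le_swap xv)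
    · exact Or.inr (Or.inr r)
    · subst r; exact absurd hc.2 (not_le_swap xy)
  · have h1 := cone_mono_left (cone_mono_right hc xy yv.le xv.le) xv ux.le uv.le
    rcases h z hz h1 with r | r | r | r | r
    · exact Or.inl r
    · subst r; exact absurd hc.1 (not_le_swap ux)
    · subst r; exact absurd hc.2 (not_le_swap yv)
    · exact Or.inr (Or.inl r)
    · exact Or.inr (Or.inr r)
  · have h1 := cone_mono_left hc yv uy.le uv.le
    rcases h z hz h1 with r | r | r | r | r
    · exact Or.inl r
    · subst r; exact absurd hc.1 (not_le_swap uy)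
    · exact Or.inr (Or.inr r)
    · subst r; exact absurd hc.1 (not_le_swap xy)
    · exact Or.inr (Or.inl r)

/-- The named family of points. -/
def fam (a p b1 b2 c b3 b4 q b5 s z I : Pt) : ℕ → Pt :=
  fun n => [a, p, b1, b2, c, b3, b4, q, b5, s, z, I].getD (n % 16) a

theorem fam_per (a p b1 b2 c b3 b4 q b5 s z I : Pt) (n : ℕ) :
    fam a p b1 b2 c b3 b4 q b5 s z I (n % 16) = fam a p b1 b2 c b3 b4 q b5 s z I n := by
  simp [fam]

def iniBase : List ℕ :=
  [mk3 0 2 1, mk3 0 3 1, mk3 0 4 1, mk3 0 3 2, mk3 0 4 2, mk3 0 4 3,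
   mk3 0 5 4, mk3 0 6 4, mk3 0 7 4, mk3 0 6 5, mk3 0 7 5, mk3 0 7 6,
   mk3 11 0 2, mk3 11 0 3, mk3 11 0 5, mk3 11 0 6,
   mk3 11 1 2, mk3 11 1 3, mk3 11 1 5, mk3 11 1 6,
   mk3 11 4 2, mk3 11 4 3, mk3 11 4 5, mk3 11 4 6,
   mk3 11 7 2, mk3 11 7 3, mk3 11 7 5, mk3 11 7 6,
   mk3 11 0 4, mk3 11 0 7]

section
variable {x0 : ℝ} {A B : Finset Pt} {a p c q b1 b2 b3 b4 : Pt}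

theorem Core.lt (C : Core x0 A B a p c q b1 b2 b3 b4) {x y : Pt} (hx : x ∈ A) (hy : y ∈ B) :
    x.1 < y.1 := (C.hA x hx).trans (C.hB y hy)

theorem Core.ne (C : Core x0 A B a p c q b1 b2 b3 b4) {x y : Pt} (hx : x ∈ A) (hy : y ∈ B) :
    x ≠ y := by
  rintro rfl
  exact lt_irrefl _ (C.lt hx hy)

theorem Core.ini (C : Core x0 A B a p c q b1 b2 b3 b4) (hq : a.1 < q.1) {I : Pt}
    (hI : ∀ x ∈ A ∪ B, ∀ y ∈ A ∪ B, x.1 < y.1 → 0 < DD I x y) (b5 s z : Pt) :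
    ∀ L ∈ iniBase, holdsL (fam a p b1 b2 c b3 b4 q b5 s z I) L := by
  have hAB : ∀ {x y}, x ∈ A → y ∈ B → 0 < DD I x y := fun hx hy =>
    hI _ (Finset.mem_union_left _ hx) _ (Finset.mem_union_right _ hy) (C.lt hx hy)
  simp only [iniBase, List.forall_mem_cons, holds_mk3 (fam_per _ _ _ _ _ _ _ _ _ _ _ _)]
  exact ⟨C.pb1, C.pb2, C.pc, C.b12, C.b1c, C.b2c, C.cb3, C.cb4, C.cq, C.b34, C.b3q, C.b4q,
    hAB C.ma C.m1, hAB C.ma C.m2, hAB C.ma C.m3, hAB C.ma C.m4,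
    hAB C.mp C.m1, hAB C.mp C.m2, hAB C.mp C.m3, hAB C.mp C.m4,
    hAB C.mc C.m1, hAB C.mc C.m2, hAB C.mc C.m3, hAB C.mc C.m4,
    hAB C.mq C.m1, hAB C.mq C.m2, hAB C.mq C.m3, hAB C.mq C.m4,
    hI _ (Finset.mem_union_left _ C.ma) _ (Finset.mem_union_left _ C.mc) C.rc,
    hI _ (Finset.mem_union_left _ C.ma) _ (Finset.mem_union_left _ C.mq) hq,
    fun L hL => by cases hL⟩

/-- The chain relation used for fans. -/
def gapR (A B : Finset Pt) (f : ℕ → Pt) (k k' : ℕ) : Prop :=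
  ∀ z ∈ A ∪ B, cone (f 0) (f k) (f k') z → z = f 0 ∨ z = f k ∨ z = f k'

theorem Core.gaps (C : Core x0 A B a p c q b1 b2 b3 b4) (b5 s z I : Pt) :
    [1, 2, 3, 4, 5, 6, 7].IsChain (gapR A B (fam a p b1 b2 c b3 b4 q b5 s z I)) := by
  have h1 : ∀ z ∈ A ∪ B, cone a p c z → z = a ∨ z = p ∨ z = c ∨ z = b1 ∨ z = b2 := by
    intro z hz hc
    rcases Finset.mem_union.1 hz with h | h
    · rcases C.gA1 z h hc with r | r | r <;> simp [r]
    · rcases C.gB1 z h hc with r | r <;> simp [r]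
  have h2 : ∀ z ∈ A ∪ B, cone a c q z → z = a ∨ z = c ∨ z = q ∨ z = b3 ∨ z = b4 := by
    intro z hz hc
    rcases Finset.mem_union.1 hz with h | h
    · rcases C.gA2 z h hc with r | r | r <;> simp [r]
    · rcases C.gB2 z h hc with r | r <;> simp [r]
  obtain ⟨u1, u2, u3⟩ := gap3 h1 C.pb1 C.pb2 C.pc C.b12 C.b1c C.b2c
  obtain ⟨v1, v2, v3⟩ := gap3 h2 C.cb3 C.cb4 C.cq C.b34 C.b3q C.b4q
  simp only [List.isChain_cons_cons, List.isChain_singleton, and_true]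
  exact ⟨u1, u2, u3, v1, v2, v3⟩

theorem Core.slopes (C : Core x0 A B a p c q b1 b2 b3 b4) (hq : a.1 < q.1) :
    sl a b2 < sl a b1 ∧ sl a c < sl a b2 ∧ sl a b3 < sl a c ∧ sl a b4 < sl a b3 ∧
    sl a q < sl a b4 := by
  have r1 := C.lt C.ma C.m1
  have r2 := C.lt C.ma C.m2
  have r3 := C.lt C.ma C.m3
  have r4 := C.lt C.ma C.m4
  exact ⟨(sl_lt r1 r2).1 C.b12, (sl_lt r2 C.rc).1 C.b2c, (sl_lt C.rc r3).1 C.cb3,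
    (sl_lt r3 r4).1 C.b34, (sl_lt r4 hq).1 C.b4q⟩

theorem Core.sem (C : Core x0 A B a p c q b1 b2 b3 b4) (hq : a.1 < q.1) {I : Pt}
    (hI : ∀ x ∈ A ∪ B, ∀ y ∈ A ∪ B, x.1 < y.1 → 0 < DD I x y) {b5 s z : Pt} (K : Cfg)
    (hK : ∀ x ∈ K.names, x ∈ [0, 1, 2, 3, 4, 5, 6, 7, 8, 9, 10, 11])
    (h8 : 8 ∈ K.names → b5 ∈ B ∧ 0 < DD a b5 q)
    (h9 : 9 ∈ K.names → s ∈ A ∧ 0 < DD a s q ∧ s ≠ p ∧ s ≠ c)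
    (h10 : 10 ∈ K.names → z ∈ B ∧ 0 < DD a z q ∧ z ≠ b5)
    (hR : ∀ x ∈ K.R, x ∈ [1, 4, 7, 9] ∧ a.1 < (fam a p b1 b2 c b3 b4 q b5 s z I x).1 ∧
      x ∈ K.names)
    (hgap : ∀ l ∈ K.fans, l.IsChain (gapR A B (fam a p b1 b2 c b3 b4 q b5 s z I)))
    (hext : ∀ l ∈ K.ext, ∃ L ∈ l, ¬ holdsL (fam a p b1 b2 c b3 b4 q b5 s z I) L) :
    Sem K A B (fam a p b1 b2 c b3 b4 q b5 s z I) := by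
  set f := fam a p b1 b2 c b3 b4 q b5 s z I with hf
  have memA : ∀ x ∈ K.names, x ∈ Aix → f x ∈ A := by
    intro x hx hx'
    simp only [Aix, List.mem_cons, List.not_mem_nil, or_false] at hx'
    rcases hx' with rfl | rfl | rfl | rfl | rfl
    · exact C.ma
    · exact C.mp
    · exact C.mc
    · exact C.mq
    · exact (h9 hx).1
  have memB : ∀ x ∈ K.names, x ∈ Bix → f x ∈ B := by
    intro x hx hx'
    simp only [Bix, List.mem_cons, List.not_mem_nil, or_false] at hx'
    rcases hx' with rfl | rfl | rfl | rfl | rfl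
    · exact C.m1
    · exact C.m2
    · exact C.m3
    · exact C.m4
    · exact (h8 hx).1
  have memP : ∀ x ∈ K.names, x ≠ 11 → f x ∈ A ∪ B := by
    intro x hx h11
    by_cases hxA : x ∈ Aix
    · exact Finset.mem_union_left _ (memA x hx hxA)
    by_cases hxB : x ∈ Bix
    · exact Finset.mem_union_right _ (memB x hx hxB)
    have hx' := hK x hx
    have : x = 10 := by
      simp only [Aix, Bix, List.mem_cons, List.not_mem_nil, or_false] at *
      omega
    subst this
    exact Finset.mem_union_right _ (h10 hx).1
  obtain ⟨s1, s2, s3, s4, s5⟩ := C.slopes hq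
  have hB5 : ∀ w ∈ B, 0 < DD a w q → sl a w < sl a q := fun w hw h => (sl_lt hq (C.lt C.ma hw)).1 h
  have slne : ∀ {u v : Pt}, sl a u < sl a v → u ≠ v ∧ v ≠ u := by
    intro u v h
    exact ⟨fun e => by rw [e] at h; exact lt_irrefl _ h, fun e => by rw [e] at h; exact lt_irrefl _ h⟩
  have n1 : p ≠ a := (DD_pos_ne C.pc).2.1.symm
  have n2 : c ≠ a := (DD_pos_ne C.pc).1.symm
  have n3 : q ≠ a := (DD_pos_ne C.cq).1.symm
  have n4 : c ≠ p := (DD_pos_ne C.pc).2.2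
  have n5 : q ≠ c := (DD_pos_ne C.cq).2.2
  have n6 : p ≠ q := by
    intro e
    have := C.cq
    rw [← e] at this
    exact absurd C.pc.le (not_le_swap this)
  have inj' : [0, 1, 2, 3, 4, 5, 6, 7, 8, 9, 10].Pairwise
      (fun x y => x ∈ K.names → y ∈ K.names → f x ≠ f y) := by
    have AB : ∀ {x y}, x ∈ Aix → y ∈ Bix → x ∈ K.names → y ∈ K.names → f x ≠ f y :=
      fun hx hy hx' hy' => C.ne (memA _ hx' hx) (memB _ hy' hy)
    have BA : ∀ {x y}, y ∈ Aix → x ∈ Bix → x ∈ K.names → y ∈ K.names → f x ≠ f y :=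
      fun hx hy hx' hy' => (C.ne (memA _ hy' hx) (memB _ hx' hy)).symm
    have A10 : ∀ {x}, x ∈ Aix → x ∈ K.names → 10 ∈ K.names → f x ≠ f 10 :=
      fun hx hx' hy' => C.ne (memA _ hx' hx) (h10 hy').1
    simp only [List.pairwise_cons, List.forall_mem_cons, List.Pairwise.nil]
    have iA0 : 0 ∈ Aix := by decide
    have iA1 : 1 ∈ Aix := by decide
    have iA4 : 4 ∈ Aix := by decide
    have iA7 : 7 ∈ Aix := by decide
    have iA9 : 9 ∈ Aix := by decide
    have iB2 : 2 ∈ Bix := by decide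
    have iB3 : 3 ∈ Bix := by decide
    have iB5 : 5 ∈ Bix := by decide
    have iB6 : 6 ∈ Bix := by decide
    have iB8 : 8 ∈ Bix := by decide
    have e8 : 8 ∈ K.names → sl a b5 < sl a q := fun h => hB5 _ (h8 h).1 (h8 h).2
    have e10 : 10 ∈ K.names → sl a z < sl a q := fun h => hB5 _ (h10 h).1 (h10 h).2.1
    have t9 : 9 ∈ K.names → q ≠ s := fun h => ((DD_pos_ne (h9 h).2.1).2.2).symm
    have t9' : 9 ∈ K.names → a ≠ s := fun h => (DD_pos_ne (h9 h).2.1).1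
    have n13 : b1 ≠ b3 := (slne (by linarith : sl a b3 < sl a b1)).2
    have n14 : b1 ≠ b4 := (slne (by linarith : sl a b4 < sl a b1)).2
    have n23 : b2 ≠ b3 := (slne (by linarith : sl a b3 < sl a b2)).2
    have n24 : b2 ≠ b4 := (slne (by linarith : sl a b4 < sl a b2)).2
    have n15 : 8 ∈ K.names → b1 ≠ b5 := fun h =>
      (slne (by have := e8 h; linarith : sl a b5 < sl a b1)).2
    have n1z : 10 ∈ K.names → b1 ≠ z := fun h =>
      (slne (by have := e10 h; linarith : sl a z < sl a b1)).2
    have n25 : 8 ∈ K.names → b2 ≠ b5 := fun h =>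
      (slne (by have := e8 h; linarith : sl a b5 < sl a b2)).2
    have n2z : 10 ∈ K.names → b2 ≠ z := fun h =>
      (slne (by have := e10 h; linarith : sl a z < sl a b2)).2
    have n35 : 8 ∈ K.names → b3 ≠ b5 := fun h =>
      (slne (by have := e8 h; linarith : sl a b5 < sl a b3)).2
    have n3z : 10 ∈ K.names → b3 ≠ z := fun h =>
      (slne (by have := e10 h; linarith : sl a z < sl a b3)).2
    have n45 : 8 ∈ K.names → b4 ≠ b5 := fun h =>
      (slne (by have := e8 h; linarith : sl a b5 < sl a b4)).2
    have n4z : 10 ∈ K.names → b4 ≠ z := fun h =>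
      (slne (by have := e10 h; linarith : sl a z < sl a b4)).2
    refine ⟨⟨fun _ _ => n1.symm, AB iA0 iB2, AB iA0 iB3, fun _ _ => n2.symm, AB iA0 iB5,
        AB iA0 iB6, fun _ _ => n3.symm, AB iA0 iB8, fun _ h => t9' h, A10 iA0, by simp⟩,
      ⟨AB iA1 iB2, AB iA1 iB3, fun _ _ => n4.symm, AB iA1 iB5, AB iA1 iB6, fun _ _ => n6,
        AB iA1 iB8, fun _ h => (h9 h).2.2.1.symm, A10 iA1, by simp⟩,
      ⟨fun _ _ => (slne s1).2, BA iA4 iB2, fun _ _ => n13, fun _ _ => n14, BA iA7 iB2,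
        fun _ h => n15 h, BA iA9 iB2, fun _ h => n1z h, by simp⟩,
      ⟨BA iA4 iB3, fun _ _ => n23, fun _ _ => n24, BA iA7 iB3,
        fun _ h => n25 h, BA iA9 iB3, fun _ h => n2z h, by simp⟩,
      ⟨AB iA4 iB5, AB iA4 iB6, fun _ _ => n5.symm, AB iA4 iB8, fun _ h => (h9 h).2.2.2.symm,
        A10 iA4, by simp⟩,
      ⟨fun _ _ => (slne s4).2, BA iA7 iB5, fun _ h => n35 h, BA iA9 iB5,
        fun _ h => n3z h, by simp⟩,
      ⟨BA iA7 iB6, fun _ h => n45 h, BA iA9 iB6, fun _ h => n4z h, by simp⟩,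
      ⟨AB iA7 iB8, fun _ h => t9 h, A10 iA7, by simp⟩,
      ⟨BA iA9 iB8, fun _ h => (h10 h).2.2.symm, by simp⟩,
      ⟨A10 iA9, by simp⟩, by simp, trivial⟩
  have injN : ∀ x ∈ K.names, ∀ y ∈ K.names, x ≠ y → x ≠ 11 → y ≠ 11 → f x ≠ f y := by
    intro x hx y hy hxy h1 h2
    have gx : x ∈ [0, 1, 2, 3, 4, 5, 6, 7, 8, 9, 10] := by
      have := hK x hx
      simp only [List.mem_cons, List.not_mem_nil, or_false] at *
      omega
    have gy : y ∈ [0, 1, 2, 3, 4, 5, 6, 7, 8, 9, 10] := by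
      have := hK y hy
      simp only [List.mem_cons, List.not_mem_nil, or_false] at *
      omega
    have : Std.Symm (fun x y => x ∈ K.names → y ∈ K.names → f x ≠ f y) :=
      ⟨fun x y h h1 h2 => (h h2 h1).symm⟩
    exact inj'.forall gx gy hxy hx hy
  have neI : ∀ x ∈ A ∪ B, ∀ y ∈ A ∪ B, x ≠ y → DD I x y ≠ 0 := by
    intro x hx y hy hxy
    rcases lt_trichotomy x.1 y.1 with h | h | h
    · exact (hI x hx y hy h).ne'
    · exact absurd (C.inj x hx y hy h) hxy
    · have := hI y hy x hx h
      rw [DD_swap] at this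
      intro h0
      linarith
  refine ⟨fam_per _ _ _ _ _ _ _ _ _ _ _ _, ?_, memA, memB, ?_, hgap, C.nohole, hext⟩
  · intro x hx y hy w hw hxy hxw hyw
    by_cases e1 : x = 11
    · subst e1
      exact neI _ (memP y hy hxy.symm) _ (memP w hw hxw.symm) (injN y hy w hw hyw hxy.symm hxw.symm)
    by_cases e2 : y = 11
    · subst e2
      have := neI _ (memP w hw hyw.symm) _ (memP x hx e1) (injN w hw x hx hxw.symm hyw.symm e1)
      rwa [← DD_rot]
    by_cases e3 : w = 11
    · subst e3
      have := neI _ (memP x hx e1) _ (memP y hy e2) (injN x hx y hy hxy e1 e2)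
      rwa [← DD_rot, ← DD_rot]
    exact C.gen _ (memP x hx e1) _ (memP y hy e2) _ (memP w hw e3) (injN x hx y hy hxy e1 e2)
      (injN x hx w hw hxw e1 e3) (injN y hy w hw hyw e2 e3)
  · intro x hx
    obtain ⟨h1, h2, h3⟩ := hR x hx
    refine C.inner _ (memA x h3 ?_) h2
    simp only [Aix, List.mem_cons, List.not_mem_nil, or_false] at *
    omega

end


section
variable {x0 : ℝ} {A B : Finset Pt} {a p c q b1 b2 b3 b4 : Pt}

/-- Facts about the line through `p` and `b5`. -/
structure Fac (a p c q b1 b2 b3 b4 b5 : Pt) : Prop where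
  apq : 0 < DD a p q
  apb : 0 < DD a p b5
  pq : 0 < DD p b5 q
  pc : 0 < DD p b5 c
  p1 : 0 < DD p b5 b1
  p2 : 0 < DD p b5 b2
  p3 : 0 < DD p b5 b3
  p4 : 0 < DD p b5 b4

theorem Core.not_c (C : Core x0 A B a p c q b1 b2 b3 b4) {s : Pt} (h : 0 < DD a s q) : s ≠ c := by
  rintro rfl
  exact absurd C.cq.le (not_le_swap h)

def cfg_case0 : Cfg :=
  { names := [0, 1, 2, 3, 4, 5, 6, 7, 9, 11], R := [4, 7, 9], fans := [[1, 2, 3, 4, 5, 6, 7, 9]],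
    ext := [] }

def tr_case0 : Tr :=
  (.n [299127, 1313573, 1313589, 11862597, 11862853, 11928133, 11928389, 4655957, 4655973,
  283140, 283396, 287236, 287492] 2258 (.l [497220, 4787045, 12125813, 11929493]) (.n []
  146 (.l [11929925, 11798421, 636740, 12125301]) (.n [7950405] 210 (.l [497156, 4589461])
  (.n [] 114 (.l [430852, 11732629]) (.n [4667653, 1641269, 1510197] 178 (.l [431364,
  4523669]) (.n [] 78 (.l [225796, 11666293]) (.n [] 82 (.l [233988, 11666325]) (.n [] 2803
  (.l [87368438790, 156087915526, 156356350982]) (.n [87636874246] 44 (.n [221444, 286980]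
  2220 (.n [2495813, 4588117, 4588373, 283412] 582 (.l [2359605, 2425141, 2490677,
  22585696774]) (.l [4886380806, 5517349, 6565925, 22601425414])) (.n [18630079494, 9920597]
  1708 (.l [5702501, 5833573, 7753781, 6882165, 9850933, 100482519814]) (.n [] 1196 (.l
  [2491221, 5702245, 5833317, 7753765, 6881909, 9850917, 1199993098758]) (.n [] 1128 (.l
  [5517349, 6565925, 18024391174]) (.n [4886380806, 2490677, 2556213, 2687285,
  17772732934, 7680037, 9777189, 3605077, 3736149] 1746 (.l [615476, 7746965, 5716293,
  169170539270, 2556773, 17773851142, 3615045, 2688117, 18770207740422]) (.n [2687845,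
  5846885, 5842789] 1166 (.l [2556741, 17773851142]) (.l [5712197, 2688117,
  18907646693894]))))))) (.n [2430469, 1510229, 1641301] 1166 (.n [] 582 (.n [1248037,
  2359605, 2556213, 2556741] 2774 (.n [5704549, 5835621, 18630079494, 4588117, 4588373]
  1239 (.l [6496437, 2493237, 6631461, 22585696774]) (.n [2558821, 2689893] 1710 (.l
  [3604821, 6895445, 5833589, 2425141, 22585696774, 3605093, 3736165, 168903152390]) (.l
  [484660, 3483253, 17772802566, 6631461, 2425141, 11932453, 2490677, 5447701, 3539285,
  91034640646]))) (.n [1444693, 4590421, 18630079494, 9920597] 1132 (.l [7745573, 2490677,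
  3605093, 5702245, 6496277, 5648405, 5702501, 5648421, 5644309, 150883164422]) (.n []
  1743 (.l [2556773, 17773851142]) (.n [6882165, 9920565] 1710 (.l [9916469, 3604821,
  100482519814, 2425141, 2491221, 17772732934]) (.l [7753781, 169170539270, 3735893,
  2425141, 2491221, 17772732934]))))) (.n [4886380806, 5517349, 6565925] 1708 (.l
  [3539541, 22601425414, 18630079494, 9920597, 5702245, 5833317, 7753765, 6881909,
  9850917, 1199993098758]) (.l [4588373, 18630079494, 18024391174, 9920597, 5702245,
  5833317, 7753765, 6881909, 9850917, 1199993098758]))) (.n [484388, 5712197, 2688117,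
  18907646693894, 5517349, 6565925] 1196 (.l [5702245, 18630079494, 4588373, 22601425414])
  (.l [3539541, 4588117, 18024391174]))))))))))))

theorem case0 (C : Core x0 A B a p c q b1 b2 b3 b4) (hq : a.1 < q.1) {s : Pt}
    (hs : s ∈ A) (qs : 0 < DD a s q) (sp : s ≠ p)
    (sr : a.1 < s.1)
    (g79 : ∀ z ∈ A ∪ B, cone a q s z → z = a ∨ z = q ∨ z = s) :
    False := by
  obtain ⟨I, hI⟩ := exists_I (A ∪ B)
  have hAB : ∀ {x y}, x ∈ A → y ∈ B → 0 < DD I x y := fun hx hy =>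
    hI _ (Finset.mem_union_left _ hx) _ (Finset.mem_union_right _ hy) (C.lt hx hy)
  have hAA : ∀ {x y}, x ∈ A → y ∈ A → x.1 < y.1 → 0 < DD I x y := fun hx hy h =>
    hI _ (Finset.mem_union_left _ hx) _ (Finset.mem_union_left _ hy) h
  have ch := C.gaps a s a I
  simp only [List.isChain_cons_cons, List.isChain_singleton, and_true] at ch
  obtain ⟨k1, k2, k3, k4, k5, k6⟩ := ch
  refine chk_main (C.sem hq hI (b5 := a) (s := s) (z := a) cfg_case0 (by decide)
    (fun h => absurd h (by decide)) (fun _ => ⟨hs, qs, sp, C.not_c qs⟩)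
    (fun h => absurd h (by decide)) ?_ ?_ ?_)
    (iniBase ++ [mk3 0 9 7, mk3 11 9 2, mk3 11 9 3, mk3 11 9 5, mk3 11 9 6, mk3 11 0 9])
    tr_case0 ?_ (by decide +kernel)
  · simp only [cfg_case0, List.forall_mem_cons]
    exact ⟨⟨by decide, C.rc, by decide⟩, ⟨by decide, hq, by decide⟩, ⟨by decide, sr, by decide⟩, by simp⟩
  · simp only [cfg_case0, List.forall_mem_cons, List.isChain_cons_cons, List.isChain_singleton, and_true]
    exact ⟨⟨k1, k2, k3, k4, k5, k6, g79⟩, by simp⟩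
  · simp [cfg_case0]
  · rw [List.forall_mem_append]
    refine ⟨C.ini hq hI _ _ _, ?_⟩
    simp only [List.forall_mem_cons, holds_mk3 (fam_per _ _ _ _ _ _ _ _ _ _ _ _)]
    exact ⟨qs, hAB hs C.m1, hAB hs C.m2, hAB hs C.m3, hAB hs C.m4, hAA C.ma hs sr, by simp⟩

def cfg_case1 : Cfg :=
  { names := [0, 1, 2, 3, 4, 5, 6, 7, 8, 11], R := [1, 4, 7], fans := [[1, 2, 3, 4, 5, 6, 7, 8]],
    ext := [] }

def tr_case1 : Tr :=
  (.n [94279, 1313573, 1313589, 11862597, 11862853, 11928133, 11928389, 4655957, 4655973,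
  12060021, 12060277, 283140, 283396, 287236, 287492, 492804, 493060] 42 (.l [151812,
  11666709]) (.n [1510229] 1777 (.l [12059509, 357124, 11732341]) (.n [] 48 (.l [360708,
  11864085]) (.n [5642245, 5707781, 1510245, 4661269, 4665365] 78 (.l [291332, 1180789])
  (.n [12059253, 492036] 112 (.l [361220, 7538053]) (.n [5715973] 1128 (.n [5517349,
  6565925] 1708 (.l [3539541, 22601425414, 18630079494, 8872021, 5702245, 5767781,
  7753765, 8802341, 1199993029126]) (.l [4588373, 18024391174, 18630079494, 8872021,
  5702245, 5767781, 7753765, 8802341, 1199993029126])) (.n [18834042941702, 4886380806,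
  2556741, 1248037, 2556213] 2766 (.n [8872021, 5701989, 5702757] 1708 (.l [5702501,
  5768037, 7753781, 8802357, 100482450182]) (.n [] 1743 (.l [3549301, 5702245,
  17773851142, 5648421, 2490677, 2425141, 6496277, 5447701, 150883164422]) (.n [8871989,
  3604837, 2490677] 586 (.l [2490709, 2556245, 17772732934, 2425141, 3605077,
  169170469638, 3670357, 3670613, 8724501, 8728597, 8728613, 19882244079878]) (.l
  [5447701, 2425141, 2491221, 17772732934])))) (.n [18630079494, 4588117, 4588373,
  4590421] 1133 (.l [6631461, 22585696774]) (.n [7745573, 2490677, 2493237, 3605093,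
  6496277, 287508, 5446501] 2256 (.l [4718949, 4719205, 4719461, 8790037, 8794133,
  8794149, 20986050674950]) (.n [5768293] 1710 (.l [6759733, 8867893, 168903082758,
  3670373, 3670629, 8790037, 8794133, 8794149, 19886539047174]) (.l [3483253,
  17772802566, 6624037, 2425141, 91034640646])))))))))))

theorem case1 (C : Core x0 A B a p c q b1 b2 b3 b4) (hq : a.1 < q.1)
    {b5 : Pt}
    (hb : b5 ∈ B) (qb : 0 < DD a b5 q)
    (pr : a.1 < p.1)
    (g78 : ∀ z ∈ A ∪ B, cone a q b5 z → z = a ∨ z = q ∨ z = b5) :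
    False := by
  obtain ⟨I, hI⟩ := exists_I (A ∪ B)
  have hAB : ∀ {x y}, x ∈ A → y ∈ B → 0 < DD I x y := fun hx hy =>
    hI _ (Finset.mem_union_left _ hx) _ (Finset.mem_union_right _ hy) (C.lt hx hy)
  have hAA : ∀ {x y}, x ∈ A → y ∈ A → x.1 < y.1 → 0 < DD I x y := fun hx hy h =>
    hI _ (Finset.mem_union_left _ hx) _ (Finset.mem_union_left _ hy) h
  have ch := C.gaps b5 a a I
  simp only [List.isChain_cons_cons, List.isChain_singleton, and_true] at ch
  obtain ⟨k1, k2, k3, k4, k5, k6⟩ := ch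
  refine chk_main (C.sem hq hI (b5 := b5) (s := a) (z := a) cfg_case1 (by decide)
    (fun _ => ⟨hb, qb⟩) (fun h => absurd h (by decide))
    (fun h => absurd h (by decide)) ?_ ?_ ?_)
    (iniBase ++ [mk3 0 8 7, mk3 11 0 8, mk3 11 1 8, mk3 11 4 8, mk3 11 7 8, mk3 11 0 1])
    tr_case1 ?_ (by decide +kernel)
  · simp only [cfg_case1, List.forall_mem_cons]
    exact ⟨⟨by decide, pr, by decide⟩, ⟨by decide, C.rc, by decide⟩, ⟨by decide, hq, by decide⟩, by simp⟩
  · simp only [cfg_case1, List.forall_mem_cons, List.isChain_cons_cons, List.isChain_singleton, and_true]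
    exact ⟨⟨k1, k2, k3, k4, k5, k6, g78⟩, by simp⟩
  · simp [cfg_case1]
  · rw [List.forall_mem_append]
    refine ⟨C.ini hq hI _ _ _, ?_⟩
    simp only [List.forall_mem_cons, holds_mk3 (fam_per _ _ _ _ _ _ _ _ _ _ _ _)]
    exact ⟨qb, hAB C.ma hb, hAB C.mp hb, hAB C.mc hb, hAB C.mq hb, hAA C.ma C.mp pr, by simp⟩

def cfg_caseF : Cfg :=
  { names := [0, 1, 2, 3, 4, 5, 6, 7, 8, 11], R := [4, 7], fans := [[1, 2, 3, 4, 5, 6, 7, 8]],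
    ext := [[mk3 0 1 7, mk3 0 1 8, mk3 1 8 7, mk3 1 8 4, mk3 1 8 2, mk3 1 8 3, mk3 1 8 5, mk3 1 8 6]] }

def tr_caseF : Tr :=
  (.n [94279, 1313573, 1313589, 11862597, 11862853, 11928133, 11928389, 4655957, 4655973,
  12060021, 12060277, 283140, 283396, 287236, 287492, 492804, 493060] 590 (.l [4661269,
  1510181, 11997701]) (.n [] 144 (.l [361476, 11864133]) (.n [12059205, 12059461, 295428,
  295684, 4663301, 4667397, 12059253, 1510197, 12059509] 44 (.n [2496261, 2496517,
  221444, 286980, 164100, 229636, 295172, 7408517] 650 (.l [282884, 480276, 2495813,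
  360708, 18630079494, 8, 6358389, 493076]) (.n [283412] 1710 (.l [8867893, 5309301,
  5309317, 8, 493076, 6357893, 6358405, 6357877, 6358389, 6836277, 168903082758]) (.n
  [] 1198 (.l [8867877, 2556757, 5309045, 5309061, 8, 493076, 6357637, 6358405,
  6357621, 6358389, 6836261, 2367909560838]) (.n [] 1742 (.l [7753781, 8871989, 5650549,
  3671397, 6357893, 169170469638, 8, 5309317]) (.n [] 1230 (.l [7753765, 2556773,
  5646453, 4588117, 5648421, 2490677, 5702501, 4886380806, 18024391174]) (.n [] 1708 (.n
  [5702501, 18630079494, 4588117] 582 (.l [2359605, 2425141, 2490677, 22585696774]) (.l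
  [4886380806, 5517349, 6565925, 22601425414])) (.n [4588373, 18630079494, 5702245] 582 (.l
  [2359605, 2425141, 2490677, 17772732934]) (.l [4886380806, 5517349, 6565925,
  18024391174])))))))) (.n [2430469, 1510245, 1510229] 46 (.l [2562053, 164100, 229636,
  295172, 360708, 426244, 7408517, 8]) (.n [] 651 (.l [19934108217606, 55118480306438,
  19934124994822]) (.n [] 1167 (.l [18765323464966, 18834042941702, 18834311377158]) (.n
  [18765591900422] 2220 (.n [4587861, 4588117, 4588373, 5702757] 583 (.l [4886380806,
  5517349, 6565925, 22601425414]) (.n [2359605, 2556213] 2768 (.l [5768037, 5768293,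
  8802357, 8802373, 164621746950]) (.n [] 1710 (.l [8867893, 3604821, 2425141, 22585696774,
  7745573, 2490677, 3605093, 6496277, 168903082758, 3670373, 3670629, 426244, 8794149,
  8790037, 8794133, 19886539047174]) (.l [3483765, 17772802566, 6631461, 2425141,
  2490677, 5447701, 6496277, 91034640646])))) (.n [18630079494, 8872021, 5701989] 1196 (.l
  [5702245, 5767781, 7753765, 8802341, 1199993029126, 1268712505862, 1337431982598,
  2556757, 2622293, 5768037, 100482450182]) (.n [] 1128 (.l [5517349, 6565925, 3539541,
  18024391174]) (.n [4886380806, 2556213] 619 (.l [5648405, 2425141, 2490677, 17772732934,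
  5702501, 5768037, 7753781, 8802357, 100482450182]) (.n [5447701, 3539285, 3604821,
  2556245] 1742 (.l [5707317, 8871989, 2490677, 169170469638, 17772732934, 3670357,
  3670613, 360708, 8728613, 8724501, 8728597, 19882244079878]) (.l [3548533, 17773851142,
  5648421, 2490677, 5640997, 150883164422]))))))))))))

theorem caseF (C : Core x0 A B a p c q b1 b2 b3 b4) (hq : a.1 < q.1)
    {b5 : Pt}
    (hb : b5 ∈ B) (qb : 0 < DD a b5 q)
    (pl : p.1 < a.1)
    (g78 : ∀ z ∈ A ∪ B, cone a q b5 z → z = a ∨ z = q ∨ z = b5) :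
    Fac a p c q b1 b2 b3 b4 b5 := by
  by_contra hn
  obtain ⟨I, hI⟩ := exists_I (A ∪ B)
  have hAB : ∀ {x y}, x ∈ A → y ∈ B → 0 < DD I x y := fun hx hy =>
    hI _ (Finset.mem_union_left _ hx) _ (Finset.mem_union_right _ hy) (C.lt hx hy)
  have hAA : ∀ {x y}, x ∈ A → y ∈ A → x.1 < y.1 → 0 < DD I x y := fun hx hy h =>
    hI _ (Finset.mem_union_left _ hx) _ (Finset.mem_union_left _ hy) h
  have ch := C.gaps b5 a a I
  simp only [List.isChain_cons_cons, List.isChain_singleton, and_true] at ch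
  obtain ⟨k1, k2, k3, k4, k5, k6⟩ := ch
  refine chk_main (C.sem hq hI (b5 := b5) (s := a) (z := a) cfg_caseF (by decide)
    (fun _ => ⟨hb, qb⟩) (fun h => absurd h (by decide))
    (fun h => absurd h (by decide)) ?_ ?_ ?_)
    (iniBase ++ [mk3 0 8 7, mk3 11 0 8, mk3 11 1 8, mk3 11 4 8, mk3 11 7 8, mk3 11 1 0])
    tr_caseF ?_ (by decide +kernel)
  · simp only [cfg_caseF, List.forall_mem_cons]
    exact ⟨⟨by decide, C.rc, by decide⟩, ⟨by decide, hq, by decide⟩, by simp⟩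
  · simp only [cfg_caseF, List.forall_mem_cons, List.isChain_cons_cons, List.isChain_singleton, and_true]
    exact ⟨⟨k1, k2, k3, k4, k5, k6, g78⟩, by simp⟩
  · simp only [cfg_caseF, List.forall_mem_cons]
    refine ⟨?_, by simp⟩
    by_contra h0
    push Not at h0
    simp only [List.forall_mem_cons, holds_mk3 (fam_per _ _ _ _ _ _ _ _ _ _ _ _)] at h0
    obtain ⟨e0, e1, e2, e3, e4, e5, e6, e7, -⟩ := h0
    exact hn ⟨e0, e1, e2, e3, e4, e5, e6, e7⟩
  · rw [List.forall_mem_append]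
    refine ⟨C.ini hq hI _ _ _, ?_⟩
    simp only [List.forall_mem_cons, holds_mk3 (fam_per _ _ _ _ _ _ _ _ _ _ _ _)]
    exact ⟨qb, hAB C.ma hb, hAB C.mp hb, hAB C.mc hb, hAB C.mq hb, hAA C.mp C.ma pl, by simp⟩

def cfg_case2b : Cfg :=
  { names := [0, 1, 2, 3, 4, 5, 6, 7, 8, 9, 11], R := [4, 7, 9], fans := [[1, 2, 3, 4, 5, 6, 7, 8, 9]],
    ext := [] }

def tr_case2b : Tr :=
  (.n [299127, 11997701, 11997957, 12063237, 12063493, 11999493, 7473173, 7538709, 1313573,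
  1313589, 11862597, 11862853, 11928133, 11928389, 4655957, 4655973, 12060021, 12060277,
  7932805, 4531973, 4597509, 12059253, 4536069, 4601605, 12059509, 12128773, 12129285,
  492804, 493060, 7950405, 7954501] 210 (.l [2692613, 7954693]) (.n [] 2803 (.l [4523925,
  1186880066566, 1255599543302, 1255867978758]) (.n [496900, 1187148502022] 1166 (.n [] 1128
  (.n [5517349, 6565925] 1708 (.l [3539541, 22601425414, 18630079494, 8872021, 5702245,
  5767781, 7753765, 8802341, 1199993029126]) (.l [4588373, 18630079494, 18024391174,
  8872021, 5702245, 5767781, 7753765, 8802341, 1199993029126])) (.n [2556741, 4886380806,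
  1248037, 2556213, 2621749] 718 (.l [7747605, 6357621, 6357877, 2490677, 17773851142,
  86493327878, 155212804614, 18630079494, 4588117, 22585696774]) (.n [] 686 (.l [356612,
  7682069, 6772757, 5309045, 5309301, 5310069, 2430469, 2425141, 5702757, 155908,
  86492279302, 155211756038, 5309029, 17772732934]) (.n [] 2770 (.n [5833829, 18630079494,
  8872021] 1747 (.l [5833573, 5846885, 3549301, 5702245, 17773851142, 5648421, 2490677,
  2425141, 221444, 6498069, 5714277, 217348, 5449493, 150883164422]) (.n [3738469,
  2493237] 1743 (.l [2556773, 17773851142]) (.n [8871989] 1710 (.l [8867893, 3607381,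
  100482450182, 2427701, 2491221, 17772732934]) (.l [7753781, 169170469638, 8859989,
  2425141, 2491221, 17772732934])))) (.n [9920597, 18630079494, 4588117, 4588373] 1710 (.l
  [8867893, 3607381, 2427701, 22585696774, 7745573, 8794149, 3605093, 3670629, 5767781,
  168903082758]) (.l [3483765, 17772802566, 6631461, 2425141, 2490677, 217348, 5449493,
  6762837, 221444, 6498069, 91034640646])))))) (.n [484388, 5712197, 2688117,
  300382623404550, 5517349, 6565925] 1196 (.l [5702245, 18630079494, 4588373, 22601425414])
  (.l [3539541, 4588117, 18024391174])))))

theorem case2b (C : Core x0 A B a p c q b1 b2 b3 b4) (hq : a.1 < q.1)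
    {b5 : Pt} (F : Fac a p c q b1 b2 b3 b4 b5) {s : Pt}
    (hb : b5 ∈ B) (qb : 0 < DD a b5 q)
    (hs : s ∈ A) (qs : 0 < DD a s q) (sp : s ≠ p) (bs : 0 < DD a s b5)
    (pl : p.1 < a.1)
    (sr : a.1 < s.1)
    (g78 : ∀ z ∈ A ∪ B, cone a q b5 z → z = a ∨ z = q ∨ z = b5)
    (g89 : ∀ z ∈ A ∪ B, cone a b5 s z → z = a ∨ z = b5 ∨ z = s) :
    False := by
  obtain ⟨I, hI⟩ := exists_I (A ∪ B)
  have hAB : ∀ {x y}, x ∈ A → y ∈ B → 0 < DD I x y := fun hx hy =>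
    hI _ (Finset.mem_union_left _ hx) _ (Finset.mem_union_right _ hy) (C.lt hx hy)
  have hAA : ∀ {x y}, x ∈ A → y ∈ A → x.1 < y.1 → 0 < DD I x y := fun hx hy h =>
    hI _ (Finset.mem_union_left _ hx) _ (Finset.mem_union_left _ hy) h
  have ch := C.gaps b5 s a I
  simp only [List.isChain_cons_cons, List.isChain_singleton, and_true] at ch
  obtain ⟨k1, k2, k3, k4, k5, k6⟩ := ch
  refine chk_main (C.sem hq hI (b5 := b5) (s := s) (z := a) cfg_case2b (by decide)
    (fun _ => ⟨hb, qb⟩) (fun _ => ⟨hs, qs, sp, C.not_c qs⟩)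
    (fun h => absurd h (by decide)) ?_ ?_ ?_)
    (iniBase ++ [mk3 0 8 7, mk3 11 0 8, mk3 11 1 8, mk3 11 4 8, mk3 11 7 8, mk3 11 9 8, mk3 0 9 7, mk3 0 9 8, mk3 11 9 2, mk3 11 9 3, mk3 11 9 5, mk3 11 9 6, mk3 11 1 0, mk3 11 0 9, mk3 0 1 7, mk3 0 1 8, mk3 1 8 7, mk3 1 8 4, mk3 1 8 2, mk3 1 8 3, mk3 1 8 5, mk3 1 8 6])
    tr_case2b ?_ (by decide +kernel)
  · simp only [cfg_case2b, List.forall_mem_cons]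
    exact ⟨⟨by decide, C.rc, by decide⟩, ⟨by decide, hq, by decide⟩, ⟨by decide, sr, by decide⟩, by simp⟩
  · simp only [cfg_case2b, List.forall_mem_cons, List.isChain_cons_cons, List.isChain_singleton, and_true]
    exact ⟨⟨k1, k2, k3, k4, k5, k6, g78, g89⟩, by simp⟩
  · simp [cfg_case2b]
  · rw [List.forall_mem_append]
    refine ⟨C.ini hq hI _ _ _, ?_⟩
    simp only [List.forall_mem_cons, holds_mk3 (fam_per _ _ _ _ _ _ _ _ _ _ _ _)]
    exact ⟨qb, hAB C.ma hb, hAB C.mp hb, hAB C.mc hb, hAB C.mq hb, hAB hs hb, qs, bs, hAB hs C.m1, hAB hs C.m2, hAB hs C.m3, hAB hs C.m4, hAA C.mp C.ma pl, hAA C.ma hs sr, F.apq, F.apb, F.pq, F.pc, F.p1, F.p2, F.p3, F.p4, by simp⟩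

def cfg_case2c : Cfg :=
  { names := [0, 1, 2, 3, 4, 5, 6, 7, 8, 9, 11], R := [4, 7], fans := [[1, 2, 3, 4, 5, 6, 7, 8, 9]],
    ext := [] }

def tr_case2c : Tr :=
  (.n [4659461, 299127, 11997957, 7883013, 12063493, 10175749, 10176005, 11862853, 11928389,
  4655957, 4655973, 12060021, 12060277, 7932805, 4536069, 4601605, 12059461, 7887109,
  4787029, 7891205, 4787045] 3346 (.l [6884229, 8455829, 9968485]) (.n [] 2834 (.l
  [5835653, 8455573, 9968469]) (.n [] 2220 (.l [4588373, 5702757, 5833829, 1324319020038,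
  5834357, 31516628230, 5768037, 5768293, 8802357, 8802373, 164621746950]) (.l
  [18630079494, 1324587455494, 8872021, 1255582766086, 6882677, 31768286470]))))

theorem case2c (C : Core x0 A B a p c q b1 b2 b3 b4) (hq : a.1 < q.1)
    {b5 : Pt} (F : Fac a p c q b1 b2 b3 b4 b5) {s : Pt}
    (hb : b5 ∈ B) (qb : 0 < DD a b5 q)
    (hs : s ∈ A) (qs : 0 < DD a s q) (sp : s ≠ p) (bs : 0 < DD a s b5)
    (pl : p.1 < a.1)
    (sl : s.1 < a.1)
    (pbs : 0 < DD p b5 s)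
    (cs : 0 < DD a s c)
    (g78 : ∀ z ∈ A ∪ B, cone a q b5 z → z = a ∨ z = q ∨ z = b5)
    (g89 : ∀ z ∈ A ∪ B, cone a b5 s z → z = a ∨ z = b5 ∨ z = s) :
    False := by
  obtain ⟨I, hI⟩ := exists_I (A ∪ B)
  have hAB : ∀ {x y}, x ∈ A → y ∈ B → 0 < DD I x y := fun hx hy =>
    hI _ (Finset.mem_union_left _ hx) _ (Finset.mem_union_right _ hy) (C.lt hx hy)
  have hAA : ∀ {x y}, x ∈ A → y ∈ A → x.1 < y.1 → 0 < DD I x y := fun hx hy h =>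
    hI _ (Finset.mem_union_left _ hx) _ (Finset.mem_union_left _ hy) h
  have ch := C.gaps b5 s a I
  simp only [List.isChain_cons_cons, List.isChain_singleton, and_true] at ch
  obtain ⟨k1, k2, k3, k4, k5, k6⟩ := ch
  refine chk_main (C.sem hq hI (b5 := b5) (s := s) (z := a) cfg_case2c (by decide)
    (fun _ => ⟨hb, qb⟩) (fun _ => ⟨hs, qs, sp, C.not_c qs⟩)
    (fun h => absurd h (by decide)) ?_ ?_ ?_)
    (iniBase ++ [mk3 0 8 7, mk3 11 0 8, mk3 11 1 8, mk3 11 4 8, mk3 11 7 8, mk3 11 9 8, mk3 0 9 7, mk3 0 9 8, mk3 11 9 2, mk3 11 9 3, mk3 11 9 5, mk3 11 9 6, mk3 11 1 0, mk3 11 9 0, mk3 0 1 7, mk3 0 1 8, mk3 1 8 7, mk3 1 8 4, mk3 1 8 2, mk3 1 8 3, mk3 1 8 5, mk3 1 8 6, mk3 1 8 9, mk3 0 9 4])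
    tr_case2c ?_ (by decide +kernel)
  · simp only [cfg_case2c, List.forall_mem_cons]
    exact ⟨⟨by decide, C.rc, by decide⟩, ⟨by decide, hq, by decide⟩, by simp⟩
  · simp only [cfg_case2c, List.forall_mem_cons, List.isChain_cons_cons, List.isChain_singleton, and_true]
    exact ⟨⟨k1, k2, k3, k4, k5, k6, g78, g89⟩, by simp⟩
  · simp [cfg_case2c]
  · rw [List.forall_mem_append]
    refine ⟨C.ini hq hI _ _ _, ?_⟩
    simp only [List.forall_mem_cons, holds_mk3 (fam_per _ _ _ _ _ _ _ _ _ _ _ _)]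
    exact ⟨qb, hAB C.ma hb, hAB C.mp hb, hAB C.mc hb, hAB C.mq hb, hAB hs hb, qs, bs, hAB hs C.m1, hAB hs C.m2, hAB hs C.m3, hAB hs C.m4, hAA C.mp C.ma pl, hAA hs C.ma sl, F.apq, F.apb, F.pq, F.pc, F.p1, F.p2, F.p3, F.p4, pbs, cs, by simp⟩

def cfg_case2d : Cfg :=
  { names := [0, 1, 2, 3, 4, 5, 6, 7, 8, 9, 11], R := [4, 7], fans := [[1, 2, 3, 4, 5, 6, 7, 8, 9], [7, 8, 9, 1], [9, 1, 2, 3, 4]],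
    ext := [] }

def tr_case2d : Tr :=
  (.n [291076, 299127, 11997701, 11997957, 12063237, 12063493, 1313573, 1313589, 11862597,
  11862853, 11928133, 11928389, 4655957, 4655973, 12060021, 12060277, 7932805, 4531973,
  4597509, 12059253, 4536069, 4601605, 492804, 493060] 658 (.l [9701141, 9701397,
  32364304150]) (.n [] 787 (.l [7407765, 32364304150]) (.n [9570325, 10160149] 2834 (.l
  [5835653, 12064149, 9968469]) (.n [] 3346 (.l [6884229, 12064405, 9968485]) (.n [] 178 (.n
  [10167557, 10175749, 9699621, 107680385318, 5517349, 6565925] 1708 (.l [3539541,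
  22601425414, 18630079494, 8872021, 5702245, 5767781, 7753765, 8802341, 1199993029126])
  (.l [4588373, 18024391174, 18630079494, 8872021, 5702245, 5767781, 7753765, 8802341,
  1199993029126])) (.n [10180101, 4787029, 4787045] 582 (.n [2359605, 2621749] 146 (.l
  [2692101, 2427205, 107680385318]) (.n [] 2220 (.l [4588117, 4588373, 5702757, 5833829,
  1324319020038, 5834357, 31516628230, 5767781, 8794149, 6631461, 22585696774]) (.l
  [1324587455494, 18630079494, 1186880066566, 8872021, 9920597, 31768286470]))) (.n
  [4886380806, 5517349, 6565925] 1708 (.l [3539541, 22601425414, 18630079494, 8872021,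
  5702245, 5767781, 7753765, 8802341, 1199993029126]) (.l [4588373, 18024391174,
  18630079494, 8872021, 5702245, 5767781, 7753765, 8802341, 1199993029126]))))))))

theorem case2d (C : Core x0 A B a p c q b1 b2 b3 b4) (hq : a.1 < q.1)
    {b5 : Pt} (F : Fac a p c q b1 b2 b3 b4 b5) {s : Pt}
    (hb : b5 ∈ B) (qb : 0 < DD a b5 q)
    (hs : s ∈ A) (qs : 0 < DD a s q) (sp : s ≠ p) (bs : 0 < DD a s b5)
    (pl : p.1 < a.1)
    (sl : s.1 < a.1)
    (asp : 0 < DD a p s)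
    (g78 : ∀ z ∈ A ∪ B, cone a q b5 z → z = a ∨ z = q ∨ z = b5)
    (g89 : ∀ z ∈ A ∪ B, cone a b5 s z → z = a ∨ z = b5 ∨ z = s)
    (g91 : ∀ z ∈ A ∪ B, cone a s p z → z = a ∨ z = s ∨ z = p) :
    False := by
  obtain ⟨I, hI⟩ := exists_I (A ∪ B)
  have hAB : ∀ {x y}, x ∈ A → y ∈ B → 0 < DD I x y := fun hx hy =>
    hI _ (Finset.mem_union_left _ hx) _ (Finset.mem_union_right _ hy) (C.lt hx hy)
  have hAA : ∀ {x y}, x ∈ A → y ∈ A → x.1 < y.1 → 0 < DD I x y := fun hx hy h =>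
    hI _ (Finset.mem_union_left _ hx) _ (Finset.mem_union_left _ hy) h
  have ch := C.gaps b5 s a I
  simp only [List.isChain_cons_cons, List.isChain_singleton, and_true] at ch
  obtain ⟨k1, k2, k3, k4, k5, k6⟩ := ch
  refine chk_main (C.sem hq hI (b5 := b5) (s := s) (z := a) cfg_case2d (by decide)
    (fun _ => ⟨hb, qb⟩) (fun _ => ⟨hs, qs, sp, C.not_c qs⟩)
    (fun h => absurd h (by decide)) ?_ ?_ ?_)
    (iniBase ++ [mk3 0 8 7, mk3 11 0 8, mk3 11 1 8, mk3 11 4 8, mk3 11 7 8, mk3 11 9 8, mk3 0 9 7, mk3 0 9 8, mk3 11 9 2, mk3 11 9 3, mk3 11 9 5, mk3 11 9 6, mk3 11 1 0, mk3 11 9 0, mk3 0 1 7, mk3 0 1 8, mk3 1 8 7, mk3 1 8 4, mk3 1 8 2, mk3 1 8 3, mk3 1 8 5, mk3 1 8 6, mk3 0 1 9])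
    tr_case2d ?_ (by decide +kernel)
  · simp only [cfg_case2d, List.forall_mem_cons]
    exact ⟨⟨by decide, C.rc, by decide⟩, ⟨by decide, hq, by decide⟩, by simp⟩
  · simp only [cfg_case2d, List.forall_mem_cons, List.isChain_cons_cons, List.isChain_singleton, and_true]
    exact ⟨⟨k1, k2, k3, k4, k5, k6, g78, g89⟩, ⟨g78, g89, g91⟩, ⟨g91, k1, k2, k3⟩, by simp⟩
  · simp [cfg_case2d]
  · rw [List.forall_mem_append]
    refine ⟨C.ini hq hI _ _ _, ?_⟩
    simp only [List.forall_mem_cons, holds_mk3 (fam_per _ _ _ _ _ _ _ _ _ _ _ _)]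
    exact ⟨qb, hAB C.ma hb, hAB C.mp hb, hAB C.mc hb, hAB C.mq hb, hAB hs hb, qs, bs, hAB hs C.m1, hAB hs C.m2, hAB hs C.m3, hAB hs C.m4, hAA C.mp C.ma pl, hAA hs C.ma sl, F.apq, F.apb, F.pq, F.pc, F.p1, F.p2, F.p3, F.p4, asp, by simp⟩

def cfg_caseZ : Cfg :=
  { names := [0, 1, 2, 3, 4, 5, 6, 7, 8, 9, 10, 11], R := [4, 7], fans := [[1, 2, 3, 4, 5, 6, 7, 8]],
    ext := [[mk3 7 9 10, mk3 0 1 10, mk3 1 10 7, mk3 1 9 7]] }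

def tr_caseZ : Tr :=
  (.l [11999749, 7932837, 7408549, 7408277, 8])

theorem caseZ (C : Core x0 A B a p c q b1 b2 b3 b4) (hq : a.1 < q.1)
    {b5 : Pt} (F : Fac a p c q b1 b2 b3 b4 b5) {s : Pt} {z : Pt}
    (hb : b5 ∈ B) (qb : 0 < DD a b5 q)
    (hs : s ∈ A) (qs : 0 < DD a s q) (sp : s ≠ p) (bs : 0 < DD a s b5)
    (hz : z ∈ B) (qz : 0 < DD a z q) (bz : 0 < DD a z b5) (zs : 0 < DD a s z)
    (pl : p.1 < a.1)
    (psz : 0 < DD p s z)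
    (asp : 0 < DD a p s)
    (g78 : ∀ z ∈ A ∪ B, cone a q b5 z → z = a ∨ z = q ∨ z = b5) :
    0 < DD q s z ∧ 0 < DD a p z ∧ 0 < DD p z q ∧ 0 < DD p s q := by
  by_contra hn
  obtain ⟨I, hI⟩ := exists_I (A ∪ B)
  have hAB : ∀ {x y}, x ∈ A → y ∈ B → 0 < DD I x y := fun hx hy =>
    hI _ (Finset.mem_union_left _ hx) _ (Finset.mem_union_right _ hy) (C.lt hx hy)
  have hAA : ∀ {x y}, x ∈ A → y ∈ A → x.1 < y.1 → 0 < DD I x y := fun hx hy h =>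
    hI _ (Finset.mem_union_left _ hx) _ (Finset.mem_union_left _ hy) h
  have ch := C.gaps b5 s z I
  simp only [List.isChain_cons_cons, List.isChain_singleton, and_true] at ch
  obtain ⟨k1, k2, k3, k4, k5, k6⟩ := ch
  refine chk_main (C.sem hq hI (b5 := b5) (s := s) (z := z) cfg_caseZ (by decide)
    (fun _ => ⟨hb, qb⟩) (fun _ => ⟨hs, qs, sp, C.not_c qs⟩)
    (fun _ => ⟨hz, qz, (DD_pos_ne bz).2.2⟩) ?_ ?_ ?_)
    (iniBase ++ [mk3 0 8 7, mk3 11 0 8, mk3 11 1 8, mk3 11 4 8, mk3 11 7 8, mk3 11 9 8, mk3 0 9 7, mk3 0 9 8, mk3 11 9 2, mk3 11 9 3, mk3 11 9 5, mk3 11 9 6, mk3 11 9 10, mk3 0 10 7, mk3 0 10 8, mk3 0 9 10, mk3 11 0 10, mk3 11 1 10, mk3 11 4 10, mk3 11 7 10, mk3 11 1 0, mk3 0 1 7, mk3 0 1 8, mk3 1 8 7, mk3 1 8 4, mk3 1 8 2, mk3 1 8 3, mk3 1 8 5, mk3 1 8 6, mk3 1 9 10, mk3 0 1 9])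
    tr_caseZ ?_ (by decide +kernel)
  · simp only [cfg_caseZ, List.forall_mem_cons]
    exact ⟨⟨by decide, C.rc, by decide⟩, ⟨by decide, hq, by decide⟩, by simp⟩
  · simp only [cfg_caseZ, List.forall_mem_cons, List.isChain_cons_cons, List.isChain_singleton, and_true]
    exact ⟨⟨k1, k2, k3, k4, k5, k6, g78⟩, by simp⟩
  · simp only [cfg_caseZ, List.forall_mem_cons]
    refine ⟨?_, by simp⟩
    by_contra h0
    push Not at h0
    simp only [List.forall_mem_cons, holds_mk3 (fam_per _ _ _ _ _ _ _ _ _ _ _ _)] at h0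
    obtain ⟨e0, e1, e2, e3, -⟩ := h0
    exact hn ⟨e0, e1, e2, e3⟩
  · rw [List.forall_mem_append]
    refine ⟨C.ini hq hI _ _ _, ?_⟩
    simp only [List.forall_mem_cons, holds_mk3 (fam_per _ _ _ _ _ _ _ _ _ _ _ _)]
    exact ⟨qb, hAB C.ma hb, hAB C.mp hb, hAB C.mc hb, hAB C.mq hb, hAB hs hb, qs, bs, hAB hs C.m1, hAB hs C.m2, hAB hs C.m3, hAB hs C.m4, hAB hs hz, qz, bz, zs, hAB C.ma hz, hAB C.mp hz, hAB C.mc hz, hAB C.mq hz, hAA C.mp C.ma pl, F.apq, F.apb, F.pq, F.pc, F.p1, F.p2, F.p3, F.p4, psz, asp, by simp⟩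

def cfg_caseZb : Cfg :=
  { names := [0, 1, 2, 3, 4, 5, 6, 7, 8, 9, 11], R := [4, 7], fans := [[1, 2, 3, 4, 5, 6, 7, 8]],
    ext := [[mk3 7 9 8, mk3 0 1 8, mk3 1 8 7, mk3 1 9 7]] }

def tr_caseZb : Tr :=
  (.l [7932805, 7407765, 8])

theorem caseZb (C : Core x0 A B a p c q b1 b2 b3 b4) (hq : a.1 < q.1)
    {b5 : Pt} (F : Fac a p c q b1 b2 b3 b4 b5) {s : Pt}
    (hb : b5 ∈ B) (qb : 0 < DD a b5 q)
    (hs : s ∈ A) (qs : 0 < DD a s q) (sp : s ≠ p) (bs : 0 < DD a s b5)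
    (pl : p.1 < a.1)
    (psb : 0 < DD p s b5)
    (asp : 0 < DD a p s)
    (g78 : ∀ z ∈ A ∪ B, cone a q b5 z → z = a ∨ z = q ∨ z = b5) :
    0 < DD q s b5 ∧ 0 < DD a p b5 ∧ 0 < DD p b5 q ∧ 0 < DD p s q := by
  by_contra hn
  obtain ⟨I, hI⟩ := exists_I (A ∪ B)
  have hAB : ∀ {x y}, x ∈ A → y ∈ B → 0 < DD I x y := fun hx hy =>
    hI _ (Finset.mem_union_left _ hx) _ (Finset.mem_union_right _ hy) (C.lt hx hy)
  have hAA : ∀ {x y}, x ∈ A → y ∈ A → x.1 < y.1 → 0 < DD I x y := fun hx hy h =>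
    hI _ (Finset.mem_union_left _ hx) _ (Finset.mem_union_left _ hy) h
  have ch := C.gaps b5 s a I
  simp only [List.isChain_cons_cons, List.isChain_singleton, and_true] at ch
  obtain ⟨k1, k2, k3, k4, k5, k6⟩ := ch
  refine chk_main (C.sem hq hI (b5 := b5) (s := s) (z := a) cfg_caseZb (by decide)
    (fun _ => ⟨hb, qb⟩) (fun _ => ⟨hs, qs, sp, C.not_c qs⟩)
    (fun h => absurd h (by decide)) ?_ ?_ ?_)
    (iniBase ++ [mk3 0 8 7, mk3 11 0 8, mk3 11 1 8, mk3 11 4 8, mk3 11 7 8, mk3 11 9 8, mk3 0 9 7, mk3 0 9 8, mk3 11 9 2, mk3 11 9 3, mk3 11 9 5, mk3 11 9 6, mk3 11 1 0, mk3 0 1 7, mk3 0 1 8, mk3 1 8 7, mk3 1 8 4, mk3 1 8 2, mk3 1 8 3, mk3 1 8 5, mk3 1 8 6, mk3 1 9 8, mk3 0 1 9])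
    tr_caseZb ?_ (by decide +kernel)
  · simp only [cfg_caseZb, List.forall_mem_cons]
    exact ⟨⟨by decide, C.rc, by decide⟩, ⟨by decide, hq, by decide⟩, by simp⟩
  · simp only [cfg_caseZb, List.forall_mem_cons, List.isChain_cons_cons, List.isChain_singleton, and_true]
    exact ⟨⟨k1, k2, k3, k4, k5, k6, g78⟩, by simp⟩
  · simp only [cfg_caseZb, List.forall_mem_cons]
    refine ⟨?_, by simp⟩
    by_contra h0
    push Not at h0
    simp only [List.forall_mem_cons, holds_mk3 (fam_per _ _ _ _ _ _ _ _ _ _ _ _)] at h0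
    obtain ⟨e0, e1, e2, e3, -⟩ := h0
    exact hn ⟨e0, e1, e2, e3⟩
  · rw [List.forall_mem_append]
    refine ⟨C.ini hq hI _ _ _, ?_⟩
    simp only [List.forall_mem_cons, holds_mk3 (fam_per _ _ _ _ _ _ _ _ _ _ _ _)]
    exact ⟨qb, hAB C.ma hb, hAB C.mp hb, hAB C.mc hb, hAB C.mq hb, hAB hs hb, qs, bs, hAB hs C.m1, hAB hs C.m2, hAB hs C.m3, hAB hs C.m4, hAA C.mp C.ma pl, F.apq, F.apb, F.pq, F.pc, F.p1, F.p2, F.p3, F.p4, psb, asp, by simp⟩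

end


theorem trans_half {a q u v w : Pt} (hu : 0 < DD a u q) (hv : 0 < DD a v q) (hw : 0 < DD a w q)
    (h1 : 0 < DD a v u) (h2 : 0 < DD a w v) : 0 < DD a w u := by
  have h3 : DD a v q * DD a w u = DD a w v * DD a u q + DD a v u * DD a w q := by
    simp only [DD_def]; ring
  have := mul_pos h2 hu
  have := mul_pos h1 hw
  by_contra hc
  push Not at hc
  have := mul_nonpos_of_nonneg_of_nonpos hv.le hc
  linarith

theorem exists_last {a q : Pt} (S : Finset Pt) (hne : S.Nonempty) (half : ∀ x ∈ S, 0 < DD a x q)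
    (gen : ∀ x ∈ S, ∀ y ∈ S, x ≠ y → DD a x y ≠ 0) :
    ∃ s ∈ S, ∀ x ∈ S, x ≠ s → 0 < DD a s x := by
  classical
  induction hne using Finset.Nonempty.cons_induction with
  | singleton b => exact ⟨b, by simp, fun x hx h => absurd (by simpa using hx) h⟩
  | cons b S hb hS ih =>
    obtain ⟨s, hs, h⟩ := ih (fun x hx => half x (by simp [hx]))
      (fun x hx y hy => gen x (by simp [hx]) y (by simp [hy]))
    have hbs : b ≠ s := by rintro rfl; exact hb hs
    have hg := gen b (by simp) s (by simp [hs]) hbs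
    rcases lt_or_gt_of_ne hg with h0 | h0
    · refine ⟨s, by simp [hs], fun x hx hxs => ?_⟩
      rcases Finset.mem_cons.1 hx with rfl | hx
      · rw [DD_swap]; linarith
      · exact h x hx hxs
    · refine ⟨b, by simp, fun x hx hxb => ?_⟩
      rcases Finset.mem_cons.1 hx with rfl | hx
      · exact absurd rfl hxb
      · by_cases hxs : x = s
        · subst hxs; exact h0
        · exact trans_half (half x (by simp [hx])) (half s (by simp [hs])) (half b (by simp))
            (h x hx hxs) h0

theorem exists_first {a q : Pt} (S : Finset Pt) (hne : S.Nonempty) (half : ∀ x ∈ S, 0 < DD a x q)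
    (gen : ∀ x ∈ S, ∀ y ∈ S, x ≠ y → DD a x y ≠ 0) :
    ∃ s ∈ S, ∀ x ∈ S, x ≠ s → 0 < DD a x s := by
  classical
  induction hne using Finset.Nonempty.cons_induction with
  | singleton b => exact ⟨b, by simp, fun x hx h => absurd (by simpa using hx) h⟩
  | cons b S hb hS ih =>
    obtain ⟨s, hs, h⟩ := ih (fun x hx => half x (by simp [hx]))
      (fun x hx y hy => gen x (by simp [hx]) y (by simp [hy]))
    have hbs : b ≠ s := by rintro rfl; exact hb hs
    have hg := gen s (by simp [hs]) b (by simp) hbs.symm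
    rcases lt_or_gt_of_ne hg with h0 | h0
    · refine ⟨s, by simp [hs], fun x hx hxs => ?_⟩
      rcases Finset.mem_cons.1 hx with rfl | hx
      · rw [DD_swap]; linarith
      · exact h x hx hxs
    · refine ⟨b, by simp, fun x hx hxb => ?_⟩
      rcases Finset.mem_cons.1 hx with rfl | hx
      · exact absurd rfl hxb
      · by_cases hxs : x = s
        · subst hxs; exact h0
        · exact trans_half (half b (by simp)) (half s (by simp [hs])) (half x (by simp [hx]))
            h0 (h x hx hxs)

/-- A lexicographically extreme point is not in the hull of the others. -/
theorem ext_lex {S : Set Pt} {u v d : Pt} {e : ℝ}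
    (h : ∀ x ∈ S, DD u v d < DD u v x ∨ (DD u v d = DD u v x ∧ e * d.1 < e * x.1)) :
    d ∉ convexHull ℝ S := by
  intro hd
  have hc : Convex ℝ {x : Pt | DD u v d < DD u v x ∨ (DD u v d = DD u v x ∧ e * d.1 < e * x.1)} := by
    intro x hx y hy s t hs ht hst
    have h1 : DD u v (s • x + t • y) = s * DD u v x + t * DD u v y := by
      have : t = 1 - s := by linarith
      subst this
      simp only [DD_def, Prod.fst_add, Prod.snd_add, Prod.smul_fst, Prod.smul_snd, smul_eq_mul]
      ring
    have h2 : e * (s • x + t • y).1 = s * (e * x.1) + t * (e * y.1) := by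
      simp only [Prod.fst_add, Prod.smul_fst, smul_eq_mul]; ring
    have e1 : DD u v d = s * DD u v d + t * DD u v d := by rw [← add_mul, hst, one_mul]
    have e2 : e * d.1 = s * (e * d.1) + t * (e * d.1) := by rw [← add_mul, hst, one_mul]
    simp only [Set.mem_ofPred_eq] at *
    rw [h1, h2]
    rcases eq_or_lt_of_le hs with hs0 | hs0
    · have : t = 1 := by linarith
      subst this; subst hs0
      simpa using hy
    rcases eq_or_lt_of_le ht with ht0 | ht0
    · have : s = 1 := by linarith
      subst this; subst ht0
      simpa using hx
    rcases hx with hx | ⟨hx, hx'⟩ <;> rcases hy with hy | ⟨hy, hy'⟩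
    · left
      have := mul_lt_mul_of_pos_left hx hs0
      have := mul_lt_mul_of_pos_left hy ht0
      linarith
    · left
      have := mul_lt_mul_of_pos_left hx hs0
      rw [← hy]
      linarith
    · left
      have := mul_lt_mul_of_pos_left hy ht0
      rw [← hx]
      linarith
    · right
      have := mul_lt_mul_of_pos_left hx' hs0
      have := mul_lt_mul_of_pos_left hy' ht0
      rw [← hx, ← hy]
      exact ⟨e1, by linarith⟩
  have := convexHull_min (fun x hx => h x hx) hc hd
  rcases this with h | h
  · exact lt_irrefl _ h
  · exact lt_irrefl _ h.2

theorem hole_erase {A B : Finset Pt} {d : Pt}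
    (hd : d ∉ convexHull ℝ (((A ∪ B : Finset Pt) : Set Pt) \ {d}))
    (h : ¬ ∃ H : Finset Pt, DividedFiveHole A B H) :
    ¬ ∃ H : Finset Pt, DividedFiveHole (A.erase d) (B.erase d) H := by
  classical
  rintro ⟨H, ⟨h1, h2, h3, h4⟩, h5, h6⟩
  have hsub : ∀ x ∈ H, x ∈ A ∪ B ∧ x ≠ d := by
    intro x hx
    have := h1 hx
    simp only [Finset.mem_union, Finset.mem_erase] at this ⊢
    tauto
  refine h ⟨H, ⟨fun x hx => (hsub x hx).1, h2, h3, ?_⟩, ?_, ?_⟩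
  · intro p hp hpH
    by_cases hpd : p = d
    · subst hpd
      intro hh
      refine hd (convexHull_mono ?_ hh)
      intro x hx
      exact ⟨(hsub x hx).1, (hsub x hx).2⟩
    · refine h4 p ?_ hpH
      simp only [Finset.mem_union, Finset.mem_erase] at hp ⊢
      tauto
  · obtain ⟨x, hx, hx'⟩ := h5
    exact ⟨x, hx, Finset.mem_of_mem_erase hx'⟩
  · obtain ⟨x, hx, hx'⟩ := h6
    exact ⟨x, hx, Finset.mem_of_mem_erase hx'⟩

section
variable {x0 : ℝ} {A B : Finset Pt} {a p c q b1 b2 b3 b4 : Pt}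

/-- Deleting an extreme unnamed point, possibly with a new first point `p'`. -/
theorem Core.erase' (C : Core x0 A B a p c q b1 b2 b3 b4) {d p' : Pt}
    (hd : d ∉ convexHull ℝ (((A ∪ B : Finset Pt) : Set Pt) \ {d}))
    (da : a ≠ d) (dc : c ≠ d) (dq : q ≠ d) (d1 : b1 ≠ d) (d2 : b2 ≠ d)
    (d3 : b3 ≠ d) (d4 : b4 ≠ d) (mp' : p' ∈ A.erase d)
    (pb1 : 0 < DD a b1 p') (pb2 : 0 < DD a b2 p') (pc : 0 < DD a c p')
    (gA1 : ∀ z ∈ A.erase d, cone a p' c z → z = a ∨ z = p' ∨ z = c)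
    (gB1 : ∀ z ∈ B, cone a p' c z → z = b1 ∨ z = b2) :
    Core x0 (A.erase d) (B.erase d) a p' c q b1 b2 b3 b4 := by
  have eA : ∀ {x}, x ∈ A.erase d → x ∈ A := fun h => Finset.mem_of_mem_erase h
  have eB : ∀ {x}, x ∈ B.erase d → x ∈ B := fun h => Finset.mem_of_mem_erase h
  have eU : ∀ {x}, x ∈ A.erase d ∪ B.erase d → x ∈ A ∪ B := by
    intro x hx
    rcases Finset.mem_union.1 hx with h | h
    · exact Finset.mem_union_left _ (eA h)
    · exact Finset.mem_union_right _ (eB h)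
  exact {
    hA := fun x hx => C.hA x (eA hx)
    hB := fun x hx => C.hB x (eB hx)
    gen := fun x hx y hy z hz => C.gen x (eU hx) y (eU hy) z (eU hz)
    inj := fun x hx y hy => C.inj x (eU hx) y (eU hy)
    ma := Finset.mem_erase.2 ⟨da, C.ma⟩
    mp := mp'
    mc := Finset.mem_erase.2 ⟨dc, C.mc⟩
    mq := Finset.mem_erase.2 ⟨dq, C.mq⟩
    m1 := Finset.mem_erase.2 ⟨d1, C.m1⟩
    m2 := Finset.mem_erase.2 ⟨d2, C.m2⟩
    m3 := Finset.mem_erase.2 ⟨d3, C.m3⟩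
    m4 := Finset.mem_erase.2 ⟨d4, C.m4⟩
    rc := C.rc
    inner := fun x hx hax u hu v hv w hw => C.inner x (eA hx) hax u (eA hu) v (eA hv) w (eA hw)
    pb1 := pb1
    pb2 := pb2
    pc := pc
    b12 := C.b12
    b1c := C.b1c
    b2c := C.b2c
    cb3 := C.cb3
    cb4 := C.cb4
    cq := C.cq
    b34 := C.b34
    b3q := C.b3q
    b4q := C.b4q
    gA1 := gA1
    gA2 := fun z hz => C.gA2 z (eA hz)
    gB1 := fun z hz => gB1 z (eB hz)
    gB2 := fun z hz => C.gB2 z (eB hz)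
    nohole := hole_erase hd C.nohole }

theorem Core.erase (C : Core x0 A B a p c q b1 b2 b3 b4) {d : Pt}
    (hd : d ∉ convexHull ℝ (((A ∪ B : Finset Pt) : Set Pt) \ {d}))
    (da : a ≠ d) (dp : p ≠ d) (dc : c ≠ d) (dq : q ≠ d) (d1 : b1 ≠ d) (d2 : b2 ≠ d)
    (d3 : b3 ≠ d) (d4 : b4 ≠ d) :
    Core x0 (A.erase d) (B.erase d) a p c q b1 b2 b3 b4 :=
  C.erase' hd da dc dq d1 d2 d3 d4 (Finset.mem_erase.2 ⟨dp, C.mp⟩) C.pb1 C.pb2 C.pc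
    (fun z hz => C.gA1 z (Finset.mem_of_mem_erase hz)) C.gB1

end


theorem btw_DD (a b s z r : Pt) :
    DD a s b * DD a z r = DD a z b * DD a s r + DD a s z * DD a b r := by
  simp only [DD_def]; ring

theorem btw_x (a b s z : Pt) :
    DD a s b * (z.1 - a.1) = DD a z b * (s.1 - a.1) + DD a s z * (b.1 - a.1) := by
  simp only [DD_def]; ring

theorem btw_pos {a b s z r : Pt} (h : 0 < DD a s b) (h1 : 0 < DD a z b) (h2 : 0 < DD a s z)
    (h3 : 0 < DD a s r) (h4 : 0 < DD a b r) : 0 < DD a z r := by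
  have e := btw_DD a b s z r
  have := mul_pos h1 h3
  have := mul_pos h2 h4
  exact pos_of_mul_pos_right (a := DD a s b) (by linarith) h.le

theorem btw_pos' {a b s z r : Pt} (h : 0 < DD a s b) (h1 : 0 < DD a z b) (h2 : 0 < DD a s z)
    (h3 : 0 < DD a r s) (h4 : 0 < DD a r b) : 0 < DD a r z := by
  have e := btw_DD a b s z r
  rw [DD_swap a r z, DD_swap a r s, DD_swap a r b] at e
  have := mul_pos h1 h3
  have := mul_pos h2 h4
  exact pos_of_mul_pos_right (a := DD a s b) (by linarith) h.le

/-- A point of the cone spanned by two left points is weakly left. -/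
theorem btw_left {a b s z : Pt} (h : 0 < DD a s b) (hc : cone a b s z) (hs : s.1 < a.1)
    (hb : b.1 < a.1) : z.1 ≤ a.1 := by
  have e := btw_x a b s z
  have h1 := mul_nonneg hc.1 (sub_nonneg.2 hs.le)
  have h2 := mul_nonneg hc.2 (sub_nonneg.2 hb.le)
  by_contra hz
  push Not at hz
  have := mul_pos h (sub_pos.2 hz)
  nlinarith

section
variable {x0 : ℝ} {A B : Finset Pt} {a p c q b1 b2 b3 b4 : Pt}

theorem Core.tri (C : Core x0 A B a p c q b1 b2 b3 b4) {x y z : Pt} (hx : x ∈ A ∪ B)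
    (hy : y ∈ A ∪ B) (hz : z ∈ A ∪ B) (hxy : x ≠ y) (hxz : x ≠ z) (hyz : y ≠ z) :
    0 < DD x y z ∨ 0 < DD x z y := by
  rcases lt_or_gt_of_ne (C.gen x hx y hy z hz hxy hxz hyz) with h | h
  · right; rw [DD_swap]; linarith
  · exact Or.inl h

theorem Core.uA (_ : Core x0 A B a p c q b1 b2 b3 b4) {x : Pt} (h : x ∈ A) : x ∈ A ∪ B :=
  Finset.mem_union_left _ h

theorem Core.uB (_ : Core x0 A B a p c q b1 b2 b3 b4) {x : Pt} (h : x ∈ B) : x ∈ A ∪ B :=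
  Finset.mem_union_right _ h

/-- The induction state of the main case. -/
structure Good (x0 : ℝ) (a c q b1 b2 b3 b4 : Pt) (A B : Finset Pt) (p : Pt) : Prop where
  C : Core x0 A B a p c q b1 b2 b3 b4
  pl : p.1 < a.1
  card : 5 ≤ A.card
  hx : ∃ x ∈ B, 0 < DD a x q
  hX : ∀ t ∈ A, 0 < DD a t q → ∃ x ∈ B, 0 < DD a x q ∧ 0 < DD a t x

/-- The induction state with further named points. -/
structure St (x0 : ℝ) (a c q b1 b2 b3 b4 : Pt) (A B : Finset Pt) (p b5 s : Pt) : Prop where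
  C : Core x0 A B a p c q b1 b2 b3 b4
  pl : p.1 < a.1
  card : 5 ≤ A.card
  hq : a.1 < q.1
  F : Fac a p c q b1 b2 b3 b4 b5
  hb : b5 ∈ B
  qb : 0 < DD a b5 q
  hs : s ∈ A
  qs : 0 < DD a s q
  sp : s ≠ p
  bs : 0 < DD a s b5
  asp : 0 < DD a p s
  g78 : ∀ z ∈ A ∪ B, cone a q b5 z → z = a ∨ z = q ∨ z = b5
  firstA : ∀ t ∈ A, 0 < DD a t q → t ≠ s → 0 < DD a t s
  firstB : ∀ x ∈ B, 0 < DD a x q → x ≠ b5 → 0 < DD a x b5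
  allT : ∀ t ∈ A, t ≠ a → t ≠ c → t ≠ q → 0 < DD a t q
  lastp : ∀ t ∈ A, t ≠ a → t ≠ c → t ≠ q → t ≠ p → 0 < DD a p t

/-- Choice of the first point of `B` after `q`. -/
theorem first_B (C : Core x0 A B a p c q b1 b2 b3 b4)
    (hx : ∃ x ∈ B, 0 < DD a x q)
    (hX : ∀ t ∈ A, 0 < DD a t q → ∃ x ∈ B, 0 < DD a x q ∧ 0 < DD a t x) :
    ∃ b5 ∈ B, 0 < DD a b5 q ∧ (∀ x ∈ B, 0 < DD a x q → x ≠ b5 → 0 < DD a x b5) ∧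
      ∀ z ∈ A ∪ B, cone a q b5 z → z = a ∨ z = q ∨ z = b5 := by
  classical
  obtain ⟨w, hw, hwq⟩ := hx
  obtain ⟨b5, hb5, h⟩ := exists_first (a := a) (q := q) (B.filter (fun x => 0 < DD a x q))
    ⟨w, by simp [hw, hwq]⟩ (fun x hx => (Finset.mem_filter.1 hx).2)
    (fun x hx y hy hxy => C.gen a (C.uA C.ma) x (C.uB (Finset.mem_filter.1 hx).1) y
      (C.uB (Finset.mem_filter.1 hy).1) (C.ne C.ma (Finset.mem_filter.1 hx).1)
      (C.ne C.ma (Finset.mem_filter.1 hy).1) hxy)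
  obtain ⟨hb, hbq⟩ := Finset.mem_filter.1 hb5
  have hfirst : ∀ x ∈ B, 0 < DD a x q → x ≠ b5 → 0 < DD a x b5 :=
    fun x hx hxq hne => h x (Finset.mem_filter.2 ⟨hx, hxq⟩) hne
  refine ⟨b5, hb, hbq, hfirst, ?_⟩
  intro z hz hc
  by_contra hn
  push Not at hn
  obtain ⟨n1, n2, n3⟩ := hn
  have z1 : 0 < DD a z q := by
    rcases C.tri (C.uA C.ma) hz (C.uA C.mq) n1.symm (DD_pos_ne hbq).2.1 n2 with h | h
    · exact h
    · exact absurd hc.1 (not_le_swap h)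
  have z2 : 0 < DD a b5 z := by
    rcases C.tri (C.uA C.ma) hz (C.uB hb) n1.symm (DD_pos_ne hbq).1 n3 with h | h
    · exact absurd hc.2 (not_le_swap h)
    · exact h
  rcases Finset.mem_union.1 hz with hz' | hz'
  · obtain ⟨x, hx, hxq, hzx⟩ := hX z hz' z1
    have h1 : 0 < DD a b5 x := trans_half hxq z1 hbq hzx z2
    have hne : x ≠ b5 := (DD_pos_ne h1).2.2.symm
    exact not_le_swap h1 (hfirst x hx hxq hne).le
  · exact not_le_swap z2 (hfirst z hz' z1 n3).le

theorem Good.st (G : Good x0 a c q b1 b2 b3 b4 A B p) (hq : a.1 < q.1) :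
    ∃ b5 s, St x0 a c q b1 b2 b3 b4 A B p b5 s := by
  classical
  obtain ⟨C, pl, card, hx, hX⟩ := G
  obtain ⟨b5, hb, qb, firstB, g78⟩ := first_B C hx hX
  have F := caseF C hq hb qb pl g78
  have ca : c ≠ a := (DD_pos_ne C.cq).2.1.symm
  have qa : q ≠ a := (DD_pos_ne C.cq).1.symm
  have pa : p ≠ a := (DD_pos_ne C.pc).2.1.symm
  have id3 : ∀ t, DD a c p * DD a q t + DD a p q * DD a c t + DD a q c * DD a p t = 0 := by
    intro t; simp only [DD_def]; ring
  have allT : ∀ t ∈ A, t ≠ a → t ≠ c → t ≠ q → 0 < DD a t q := by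
    intro t ht n1 n2 n3
    rcases C.tri (C.uA C.ma) (C.uA ht) (C.uA C.mq) n1.symm qa.symm n3 with h | h
    · exact h
    exfalso
    rcases C.tri (C.uA C.ma) (C.uA ht) (C.uA C.mc) n1.symm ca.symm n2 with h1 | h1
    · rcases C.gA2 t ht ⟨h1.le, h.le⟩ with r | r | r <;> contradiction
    by_cases tp : t = p
    · subst tp; exact not_le_swap h F.apq.le
    rcases C.tri (C.uA C.ma) (C.uA ht) (C.uA C.mp) n1.symm pa.symm tp with h2 | h2
    · rcases C.gA1 t ht ⟨h2.le, h1.le⟩ with r | r | r <;> contradiction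
    have e := id3 t
    have := mul_pos C.pc h
    have := mul_pos F.apq h1
    have := mul_pos C.cq h2
    linarith
  have lastp : ∀ t ∈ A, t ≠ a → t ≠ c → t ≠ q → t ≠ p → 0 < DD a p t := by
    intro t ht n1 n2 n3 n4
    rcases C.tri (C.uA C.ma) (C.uA ht) (C.uA C.mp) n1.symm pa.symm n4 with h2 | h2
    · exfalso
      have e := id3 t
      have h3 := allT t ht n1 n2 n3
      rw [DD_swap a t q, DD_swap a t p] at e
      have := mul_pos C.pc h3
      have := mul_pos C.cq h2
      have h4 : 0 < DD a c t := pos_of_mul_pos_right (a := DD a p q) (by linarith) F.apq.le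
      rcases C.gA1 t ht ⟨h2.le, h4.le⟩ with r | r | r <;> contradiction
    · exact h2
  obtain ⟨s, hs0, hs1⟩ := exists_first (a := a) (q := q) (A.filter (fun x => 0 < DD a x q))
    ⟨p, by simp [C.mp, F.apq]⟩ (fun x hx => (Finset.mem_filter.1 hx).2)
    (fun x hx y hy hxy => C.gen a (C.uA C.ma) x (C.uA (Finset.mem_filter.1 hx).1) y
      (C.uA (Finset.mem_filter.1 hy).1) (DD_pos_ne (Finset.mem_filter.1 hx).2).1
      (DD_pos_ne (Finset.mem_filter.1 hy).2).1 hxy)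
  obtain ⟨hs, qs⟩ := Finset.mem_filter.1 hs0
  have firstA : ∀ t ∈ A, 0 < DD a t q → t ≠ s → 0 < DD a t s :=
    fun x hx hxq hne => hs1 x (Finset.mem_filter.2 ⟨hx, hxq⟩) hne
  have sp : s ≠ p := by
    rintro rfl
    have : ({a, c, q, s} : Finset Pt).card ≤ 4 := Finset.card_le_four
    obtain ⟨t, ht, htn⟩ : ∃ t ∈ A, t ∉ ({a, c, q, s} : Finset Pt) := by
      by_contra hcon
      push Not at hcon
      have := Finset.card_le_card (show A ⊆ {a, c, q, s} from hcon)
      omega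
    simp only [Finset.mem_insert, Finset.mem_singleton, not_or] at htn
    obtain ⟨n1, n2, n3, n4⟩ := htn
    exact not_le_swap (lastp t ht n1 n2 n3 n4) (firstA t ht (allT t ht n1 n2 n3) n4).le
  have sa : s ≠ a := (DD_pos_ne qs).1.symm
  have asp : 0 < DD a p s := lastp s hs sa (C.not_c qs) (DD_pos_ne qs).2.2 sp
  have bs : 0 < DD a s b5 := by
    obtain ⟨x, hx, hxq, hsx⟩ := hX s hs qs
    by_cases h : x = b5
    · rwa [← h]
    · exact trans_half qb hxq qs (firstB x hx hxq h) hsx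
  exact ⟨b5, s, C, pl, card, hq, F, hb, qb, hs, qs, sp, bs, asp, g78, firstA, firstB, allT, lastp⟩

end


section
variable {x0 : ℝ} {A B : Finset Pt} {a p c q b1 b2 b3 b4 b5 s : Pt}

/-- A smaller instance exists. -/
def Smaller (x0 : ℝ) (a c q b1 b2 b3 b4 : Pt) (A B : Finset Pt) : Prop :=
  ∃ A' B' p', A'.card + B'.card < A.card + B.card ∧ Good x0 a c q b1 b2 b3 b4 A' B' p'

theorem card_erase2 {d : Pt} (hd : d ∈ A ∪ B) :
    (A.erase d).card + (B.erase d).card < A.card + B.card := by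
  rcases Finset.mem_union.1 hd with h | h
  · have := Finset.card_erase_lt_of_mem h
    have := Finset.card_erase_le (s := B) (a := d)
    omega
  · have := Finset.card_erase_lt_of_mem h
    have := Finset.card_erase_le (s := A) (a := d)
    omega

theorem card_erase5 {d : Pt} (h5 : 5 ≤ A.card) (h6 : d ∈ A → 6 ≤ A.card) :
    5 ≤ (A.erase d).card := by
  by_cases h : d ∈ A
  · rw [Finset.card_erase_of_mem h]
    have := h6 h
    omega
  · rw [Finset.erase_eq_of_notMem h]
    exact h5

theorem St.later (S : St x0 a c q b1 b2 b3 b4 A B p b5 s) {x t : Pt} (xq : 0 < DD a x q)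
    (sx : 0 < DD a s x) (ht : t ∈ A) (tq : 0 < DD a t q) : 0 < DD a t x := by
  by_cases h : t = s
  · rwa [h]
  · exact trans_half xq S.qs tq sx (S.firstA t ht tq h)

theorem St.hX' (S : St x0 a c q b1 b2 b3 b4 A B p b5 s) {d : Pt}
    (w : ∃ x ∈ B, x ≠ d ∧ 0 < DD a x q ∧ 0 < DD a s x) :
    (∃ x ∈ B.erase d, 0 < DD a x q) ∧
    ∀ t ∈ A.erase d, 0 < DD a t q → ∃ x ∈ B.erase d, 0 < DD a x q ∧ 0 < DD a t x := by
  obtain ⟨x, hx, hxd, xq, sx⟩ := w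
  exact ⟨⟨x, Finset.mem_erase.2 ⟨hxd, hx⟩, xq⟩, fun t ht tq =>
    ⟨x, Finset.mem_erase.2 ⟨hxd, hx⟩, xq, S.later xq sx (Finset.mem_of_mem_erase ht) tq⟩⟩

theorem St.del (S : St x0 a c q b1 b2 b3 b4 A B p b5 s) {d : Pt} (hd : d ∈ A ∪ B)
    (he : d ∉ convexHull ℝ (((A ∪ B : Finset Pt) : Set Pt) \ {d}))
    (da : a ≠ d) (dp : p ≠ d) (dc : c ≠ d) (dq : q ≠ d) (d1 : b1 ≠ d) (d2 : b2 ≠ d)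
    (d3 : b3 ≠ d) (d4 : b4 ≠ d) (h6 : d ∈ A → 6 ≤ A.card)
    (w : ∃ x ∈ B, x ≠ d ∧ 0 < DD a x q ∧ 0 < DD a s x) :
    Smaller x0 a c q b1 b2 b3 b4 A B :=
  ⟨A.erase d, B.erase d, p, card_erase2 hd, S.C.erase he da dp dc dq d1 d2 d3 d4, S.pl,
    card_erase5 S.card h6, (S.hX' w).1, (S.hX' w).2⟩

theorem St.g89 (S : St x0 a c q b1 b2 b3 b4 A B p b5 s)
    (h1 : ∀ x ∈ B, 0 < DD a x q → 0 < DD a s x → x = b5) :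
    ∀ z ∈ A ∪ B, cone a b5 s z → z = a ∨ z = b5 ∨ z = s := by
  intro z hz hc
  by_contra hn
  push Not at hn
  obtain ⟨n1, n2, n3⟩ := hn
  have C := S.C
  have z1 : 0 < DD a z b5 := by
    rcases C.tri (C.uA C.ma) hz (C.uB S.hb) n1.symm (DD_pos_ne S.qb).1 n2 with h | h
    · exact h
    · exact absurd hc.1 (not_le_swap h)
  have z2 : 0 < DD a s z := by
    rcases C.tri (C.uA C.ma) hz (C.uA S.hs) n1.symm (DD_pos_ne S.qs).1 n3 with h | h
    · exact absurd hc.2 (not_le_swap h)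
    · exact h
  have zq : 0 < DD a z q := btw_pos S.bs z1 z2 S.qs S.qb
  rcases Finset.mem_union.1 hz with hz' | hz'
  · exact not_le_swap z2 (S.firstA z hz' zq n3).le
  · exact n2 (h1 z hz' zq z2)

/-- Something lies below the line `p b5`. -/
theorem St.below (S : St x0 a c q b1 b2 b3 b4 A B p b5 s) (h6 : 6 ≤ A.card)
    (h : ∃ z ∈ A ∪ B, DD p b5 z < 0) : Smaller x0 a c q b1 b2 b3 b4 A B := by
  classical
  obtain ⟨z, hz, hz0⟩ := h
  have C := S.C
  obtain ⟨m, hm, hmin⟩ := Finset.exists_min_image (A ∪ B) (fun x => DD p b5 x) ⟨z, hz⟩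
  obtain ⟨d, hd, hdmin⟩ := Finset.exists_min_image ((A ∪ B).filter (fun x => DD p b5 x = DD p b5 m))
    (fun x => x.1) ⟨m, by simp [Finset.mem_union.1 hm]⟩
  obtain ⟨hdu, hdm⟩ := Finset.mem_filter.1 hd
  have hneg : DD p b5 d < 0 := by rw [hdm]; exact (hmin z hz).trans_lt hz0
  have ne : ∀ {x}, 0 ≤ DD p b5 x → x ≠ d := by
    rintro x hx rfl
    linarith
  refine S.del hdu ?_ (ne ?_) (ne ?_) (ne S.F.pc.le) (ne S.F.pq.le) (ne S.F.p1.le) (ne S.F.p2.le)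
    (ne S.F.p3.le) (ne S.F.p4.le) (fun _ => h6) ⟨b5, S.hb, ne ?_, S.qb, S.bs⟩
  · refine ext_lex (u := p) (v := b5) (e := 1) ?_
    rintro x ⟨hx, hxd⟩
    rcases (hmin x hx).lt_or_eq with h1 | h1
    · left; rw [hdm]; exact h1
    · right
      refine ⟨by rw [hdm]; exact h1, ?_⟩
      have h2 := hdmin x (Finset.mem_filter.2 ⟨hx, h1.symm⟩)
      rcases h2.lt_or_eq with h3 | h3
      · linarith
      · exact absurd (C.inj d hdu x hx h3).symm hxd
  · rw [DD_rot]; exact S.F.apb.le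
  · rw [DD_self2]
  · rw [DD_self3]

/-- Deleting `b5` when it is not the only point of `X`. -/
theorem St.delb5 (S : St x0 a c q b1 b2 b3 b4 A B p b5 s)
    (h : ∀ z ∈ A ∪ B, 0 ≤ DD p b5 z)
    (w : ∃ x ∈ B, x ≠ b5 ∧ 0 < DD a x q ∧ 0 < DD a s x) :
    Smaller x0 a c q b1 b2 b3 b4 A B := by
  have C := S.C
  have ne : ∀ {x}, 0 < DD p b5 x → x ≠ b5 := fun h => (DD_pos_ne h).2.2.symm
  refine S.del (C.uB S.hb) ?_ (C.ne C.ma S.hb) (C.ne C.mp S.hb) (C.ne C.mc S.hb) (C.ne C.mq S.hb)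
    (ne S.F.p1) (ne S.F.p2) (ne S.F.p3) (ne S.F.p4)
    (fun h => absurd rfl (C.ne h S.hb)) w
  refine ext_lex (u := p) (v := b5) (e := -1) ?_
  rintro x ⟨hx, hxd⟩
  rw [DD_self3]
  by_cases hxp : x = p
  · right
    subst hxp
    refine ⟨(DD_self2 _ _).symm, ?_⟩
    have := C.lt C.mp S.hb
    linarith
  · left
    have := C.gen p (C.uA C.mp) b5 (C.uB S.hb) x hx (C.ne C.mp S.hb) (Ne.symm hxp) (Ne.symm hxd)
    exact lt_of_le_of_ne (h x hx) this.symm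

/-- Deleting the leftmost point. -/
theorem St.left (S : St x0 a c q b1 b2 b3 b4 A B p b5 s) (h6 : 6 ≤ A.card)
    (sl : s.1 < a.1) (cs : 0 < DD a c s) : Smaller x0 a c q b1 b2 b3 b4 A B := by
  classical
  have C := S.C
  obtain ⟨d, hd, hmin⟩ := Finset.exists_min_image (A ∪ B) (fun x => x.1) ⟨a, C.uA C.ma⟩
  have he : d ∉ convexHull ℝ (((A ∪ B : Finset Pt) : Set Pt) \ {d}) := by
    refine ext_lex (u := (0, 0)) (v := (0, -1)) (e := 1) ?_
    rintro x ⟨hx, hxd⟩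
    left
    have h1 : d.1 ≠ x.1 := fun h => hxd (C.inj d hd x hx h).symm
    have := lt_of_le_of_ne (hmin x hx) h1
    simp only [DD_def]
    nlinarith
  have dp : d.1 ≤ p.1 := hmin p (C.uA C.mp)
  have pl := S.pl
  have ne : ∀ {x : Pt}, a.1 ≤ x.1 → x ≠ d := by
    rintro x hx rfl
    linarith
  have da : a ≠ d := ne le_rfl
  have dc : c ≠ d := ne C.rc.le
  have dq : q ≠ d := ne S.hq.le
  have d1 : b1 ≠ d := ne (C.lt C.ma C.m1).le
  have d2 : b2 ≠ d := ne (C.lt C.ma C.m2).le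
  have d3 : b3 ≠ d := ne (C.lt C.ma C.m3).le
  have d4 : b4 ≠ d := ne (C.lt C.ma C.m4).le
  have d5 : b5 ≠ d := ne (C.lt C.ma S.hb).le
  have w : ∃ x ∈ B, x ≠ d ∧ 0 < DD a x q ∧ 0 < DD a s x := ⟨b5, S.hb, d5, S.qb, S.bs⟩
  by_cases hpd : p = d
  swap
  · exact S.del hd he da hpd dc dq d1 d2 d3 d4 (fun _ => h6) w
  subst hpd
  obtain ⟨p', hp', hlast⟩ := exists_last (a := a) (q := q)
    ((A.erase p).filter (fun x => 0 < DD a x q))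
    ⟨s, by simp [S.sp, S.hs, S.qs]⟩ (fun x hx => (Finset.mem_filter.1 hx).2)
    (fun x hx y hy hxy => C.gen a (C.uA C.ma) x
      (C.uA (Finset.mem_of_mem_erase (Finset.mem_filter.1 hx).1)) y
      (C.uA (Finset.mem_of_mem_erase (Finset.mem_filter.1 hy).1))
      (DD_pos_ne (Finset.mem_filter.1 hx).2).1
      (DD_pos_ne (Finset.mem_filter.1 hy).2).1 hxy)
  obtain ⟨hp1, p'q⟩ := Finset.mem_filter.1 hp'
  obtain ⟨p'p, p'A⟩ := Finset.mem_erase.1 hp1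
  have pp' : 0 < DD a p p' := S.lastp p' p'A (DD_pos_ne p'q).1.symm (C.not_c p'q)
    (DD_pos_ne p'q).2.2 p'p
  have both : 0 < DD a c p' ∧ p'.1 < a.1 := by
    by_cases h : p' = s
    · rw [h]; exact ⟨cs, sl⟩
    · have h1 := S.firstA p' p'A p'q h
      refine ⟨btw_pos' S.asp h1 pp' C.pc cs, ?_⟩
      have h2 := btw_left S.asp ⟨h1.le, pp'.le⟩ S.pl sl
      refine lt_of_le_of_ne h2 (fun h3 => ?_)
      exact (DD_pos_ne p'q).1 (C.inj a (C.uA C.ma) p' (C.uA p'A) h3.symm)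
  have pb : ∀ b, 0 < DD a b p → 0 < DD a c b → 0 < DD a b p' := fun b h1 h2 =>
    btw_pos C.pc h1 h2 both.1 pp'
  refine ⟨A.erase p, B.erase p, p', card_erase2 hd,
    C.erase' he da dc dq d1 d2 d3 d4 hp1 (pb b1 C.pb1 C.b1c) (pb b2 C.pb2 C.b2c) both.1 ?_ ?_,
    both.2, card_erase5 S.card (fun _ => h6), (S.hX' w).1, (S.hX' w).2⟩
  · intro z hz hc
    by_contra hn
    push Not at hn
    obtain ⟨n1, n2, n3⟩ := hn
    by_cases n4 : z = q
    · subst n4; exact not_le_swap C.cq hc.2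
    have h1 := S.allT z (Finset.mem_of_mem_erase hz) n1 n3 n4
    exact not_le_swap (hlast z (Finset.mem_filter.2 ⟨hz, h1⟩) n2) hc.1
  · intro z hz hc
    rcases le_or_gt 0 (DD a z p) with h1 | h1
    · exact C.gB1 z hz ⟨h1, hc.2⟩
    · exfalso
      have h2 : 0 ≤ DD a p z := by rw [DD_swap]; linarith
      have h3 := btw_left pp' ⟨hc.1, h2⟩ S.pl both.2
      have := C.lt C.ma hz
      linarith

theorem St.big (S : St x0 a c q b1 b2 b3 b4 A B p b5 s) (h6 : 6 ≤ A.card) :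
    Smaller x0 a c q b1 b2 b3 b4 A B := by
  have C := S.C
  by_cases hD : ∃ z ∈ A ∪ B, DD p b5 z < 0
  · exact S.below h6 hD
  push Not at hD
  by_cases hX : ∃ x ∈ B, x ≠ b5 ∧ 0 < DD a x q ∧ 0 < DD a s x
  · exact S.delb5 hD hX
  have h1 : ∀ x ∈ B, 0 < DD a x q → 0 < DD a s x → x = b5 := by
    intro x hx h2 h3
    by_contra h4
    exact hX ⟨x, hx, h4, h2, h3⟩
  have g89 := S.g89 h1
  have sa : a ≠ s := (DD_pos_ne S.qs).1
  have sb : b5 ≠ s := (C.ne S.hs S.hb).symm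
  rcases lt_trichotomy s.1 a.1 with hl | hl | hl
  · have pbs : 0 < DD p b5 s := lt_of_le_of_ne (hD s (C.uA S.hs))
      (C.gen p (C.uA C.mp) b5 (C.uB S.hb) s (C.uA S.hs) (C.ne C.mp S.hb) S.sp.symm sb).symm
    rcases C.tri (C.uA C.ma) (C.uA S.hs) (C.uA C.mc) sa (DD_pos_ne C.pc).1 (C.not_c S.qs) with h | h
    · exact (case2c C S.hq S.F S.hb S.qb S.hs S.qs S.sp S.bs S.pl hl pbs h S.g78 g89).elim
    · exact S.left h6 hl h
  · exact absurd (C.inj s (C.uA S.hs) a (C.uA C.ma) hl).symm sa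
  · exact (case2b C S.hq S.F S.hb S.qb S.hs S.qs S.sp S.bs S.pl hl S.g78 g89).elim

theorem St.small (S : St x0 a c q b1 b2 b3 b4 A B p b5 s) (h5 : A.card = 5) :
    Smaller x0 a c q b1 b2 b3 b4 A B := by
  classical
  have C := S.C
  have n1 : c ≠ a := (DD_pos_ne C.cq).2.1.symm
  have n2 : q ≠ a := (DD_pos_ne C.cq).1.symm
  have n3 : p ≠ a := (DD_pos_ne C.pc).2.1.symm
  have sa : a ≠ s := (DD_pos_ne S.qs).1
  have n4 : q ≠ c := (DD_pos_ne C.cq).2.2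
  have n5 : c ≠ p := (DD_pos_ne C.pc).2.2
  have n6 : p ≠ q := (DD_pos_ne S.F.apq).2.2
  have n7 : s ≠ c := C.not_c S.qs
  have n8 : s ≠ q := (DD_pos_ne S.qs).2.2
  have n9 : s ≠ p := S.sp
  have hA : ({a, c, q, p, s} : Finset Pt) = A := by
    apply Finset.eq_of_subset_of_card_le
    · intro x hx
      simp only [Finset.mem_insert, Finset.mem_singleton] at hx
      rcases hx with rfl | rfl | rfl | rfl | rfl
      exacts [C.ma, C.mc, C.mq, C.mp, S.hs]
    · rw [h5, Finset.card_insert_of_notMem, Finset.card_insert_of_notMem,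
        Finset.card_insert_of_notMem, Finset.card_insert_of_notMem, Finset.card_singleton]
      · simp [n9.symm]
      · simp [n6.symm, n8.symm]
      · simp [n4.symm, n5, n7.symm]
      · simp [n1.symm, n2.symm, n3.symm, sa]
  have hA' : ∀ z ∈ A, z = a ∨ z = c ∨ z = q ∨ z = p ∨ z = s := by
    intro z hz
    rw [← hA] at hz
    simpa using hz
  by_cases hX : ∃ x ∈ B, x ≠ b5 ∧ 0 < DD a x q ∧ 0 < DD a s x
  swap
  · have h1 : ∀ x ∈ B, 0 < DD a x q → 0 < DD a s x → x = b5 := by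
      intro x hx h2 h3
      by_contra h4
      exact hX ⟨x, hx, h4, h2, h3⟩
    have g89 := S.g89 h1
    rcases lt_trichotomy s.1 a.1 with hl | hl | hl
    · refine (case2d C S.hq S.F S.hb S.qb S.hs S.qs S.sp S.bs S.pl hl S.asp S.g78 g89 ?_).elim
      intro z hz hc
      have h2 := btw_left S.asp hc S.pl hl
      rcases Finset.mem_union.1 hz with h | h
      · rcases hA' z h with rfl | rfl | rfl | rfl | rfl
        · exact Or.inl rfl
        · have := C.rc; linarith
        · have := S.hq; linarith
        · exact Or.inr (Or.inr rfl)
        · exact Or.inr (Or.inl rfl)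
      · have := C.lt C.ma h
        linarith
    · exact absurd (C.inj s (C.uA S.hs) a (C.uA C.ma) hl).symm sa
    · exact (case2b C S.hq S.F S.hb S.qb S.hs S.qs S.sp S.bs S.pl hl S.g78 g89).elim
  have apx : ∀ x, 0 < DD a x q → 0 < DD a s x → 0 < DD a p x := fun x h1 h2 =>
    trans_half h1 S.qs S.F.apq h2 S.asp
  by_cases hlow : ∃ x ∈ B, 0 < DD a x q ∧ 0 < DD a s x ∧ 0 < DD p x s
  · obtain ⟨x, hx, xq, sx, pxs⟩ := hlow
    have half : ∀ y ∈ B, 0 < DD p y (p.1, p.2 + 1) := by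
      intro y hy
      have := C.lt C.mp hy
      simp only [DD_def]
      linarith
    obtain ⟨d, hd, hlast⟩ := exists_last (a := p) (q := (p.1, p.2 + 1)) B ⟨x, hx⟩ half
      (fun y hy z hz hyz => C.gen p (C.uA C.mp) y (C.uB hy) z (C.uB hz) (C.ne C.mp hy)
        (C.ne C.mp hz) hyz)
    have hbig : ∀ {y z}, y ∈ B → p.1 < z.1 → 0 < DD p y z → 0 < DD p d z := by
      intro y z hy hz h
      by_cases hyd : y = d
      · rwa [← hyd]
      · have h2 := (sl_lt (C.lt C.mp hy) (C.lt C.mp hd)).1 (hlast y hy hyd)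
        have h3 := (sl_lt hz (C.lt C.mp hy)).1 h
        exact (sl_lt hz (C.lt C.mp hd)).2 (h2.trans h3)
    have pl := S.pl
    have rc := C.rc
    have hq := S.hq
    have xa : 0 < DD p x a := by rw [DD_rot]; exact apx x xq sx
    have sa' : 0 < DD p s a := by rw [DD_rot]; exact S.asp
    have sr : p.1 < s.1 := by
      have e : DD p x a * (s.1 - p.1) = DD p x s * (a.1 - p.1) + DD p s a * (x.1 - p.1) := by
        simp only [DD_def]; ring
      have := mul_pos pxs (sub_pos.2 pl)
      have := mul_pos sa' (sub_pos.2 (C.lt C.mp hx))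
      have := pos_of_mul_pos_right (a := DD p x a) (b := s.1 - p.1) (by linarith) xa.le
      linarith
    have e1 : 0 < DD p d a := hbig S.hb pl (by rw [DD_rot]; exact S.F.apb)
    have e2 : 0 < DD p d c := hbig S.hb (by linarith) S.F.pc
    have e3 : 0 < DD p d q := hbig S.hb (by linarith) S.F.pq
    have e4 : 0 < DD p d s := hbig hx sr pxs
    have f1 : 0 < DD p d b1 := hbig S.hb (C.lt C.mp C.m1) S.F.p1
    have f2 : 0 < DD p d b2 := hbig S.hb (C.lt C.mp C.m2) S.F.p2
    have f3 : 0 < DD p d b3 := hbig S.hb (C.lt C.mp C.m3) S.F.p3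
    have f4 : 0 < DD p d b4 := hbig S.hb (C.lt C.mp C.m4) S.F.p4
    have ne : ∀ {x}, 0 < DD p d x → x ≠ d := fun h => (DD_pos_ne h).2.2.symm
    refine S.del (C.uB hd) ?_ (ne e1) (C.ne C.mp hd) (ne e2) (ne e3) (ne f1) (ne f2) (ne f3) (ne f4)
      (fun h => absurd rfl (C.ne h hd)) ?_
    · refine ext_lex (u := p) (v := d) (e := -1) ?_
      rintro y ⟨hy, hyd⟩
      rw [DD_self3]
      rcases Finset.mem_union.1 hy with h | h
      · rcases hA' y h with rfl | rfl | rfl | rfl | rfl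
        · exact Or.inl e1
        · exact Or.inl e2
        · exact Or.inl e3
        · right
          refine ⟨(DD_self2 _ _).symm, ?_⟩
          have := C.lt C.mp hd
          linarith
        · exact Or.inl e4
      · exact Or.inl (hlast y h hyd)
    · by_cases hdb : d = b5
      · rw [hdb]; exact hX
      · exact ⟨b5, S.hb, Ne.symm hdb, S.qb, S.bs⟩
  have psx : ∀ x ∈ B, 0 < DD a x q → 0 < DD a s x → 0 < DD p s x := by
    intro x hx h1 h2
    rcases C.tri (C.uA C.mp) (C.uA S.hs) (C.uB hx) S.sp.symm (C.ne C.mp hx) (C.ne S.hs hx) with h | h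
    · exact h
    · exact absurd ⟨x, hx, h1, h2, h⟩ hlow
  have facts : ∀ x ∈ B, 0 < DD a x q → 0 < DD a s x →
      0 < DD q s x ∧ 0 < DD a p x ∧ 0 < DD p x q ∧ 0 < DD p s q := by
    intro x hx h1 h2
    by_cases hxb : x = b5
    · subst hxb
      exact caseZb C S.hq S.F S.hb S.qb S.hs S.qs S.sp S.bs S.pl (psx _ hx h1 h2) S.asp S.g78
    · exact caseZ C S.hq S.F S.hb S.qb S.hs S.qs S.sp S.bs hx h1 (S.firstB x hx h1 hxb) h2 S.pl
        (psx _ hx h1 h2) S.asp S.g78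
  exfalso
  obtain ⟨w, hw, hlast⟩ := exists_last (a := q) (q := (2 * q.1 - s.1, 2 * q.2 - s.2))
    (B.filter (fun x => 0 < DD a x q ∧ 0 < DD a s x))
    ⟨b5, by simp [S.hb, S.qb, S.bs]⟩
    (by
      intro x hx
      obtain ⟨hx, h1, h2⟩ := Finset.mem_filter.1 hx
      have := (facts x hx h1 h2).1
      simp only [DD_def] at this ⊢
      linarith)
    (fun x hx y hy hxy => C.gen q (C.uA C.mq) x (C.uB (Finset.mem_filter.1 hx).1) y
      (C.uB (Finset.mem_filter.1 hy).1) (C.ne C.mq (Finset.mem_filter.1 hx).1)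
      (C.ne C.mq (Finset.mem_filter.1 hy).1) hxy)
  obtain ⟨wB, wq, sw⟩ := Finset.mem_filter.1 hw
  obtain ⟨t1, t2, t3, t4⟩ := facts w wB wq sw
  have psw := psx w wB wq sw
  have swq : 0 < DD s w q := by rw [DD_rot]; exact t1
  refine C.nohole (five_hole A B a p s w q (C.uA C.ma) (C.uA C.mp) (C.uA S.hs) (C.uB wB) (C.uA C.mq)
    ⟨a, C.ma, Or.inl rfl⟩ ⟨w, wB, by simp⟩ S.asp t2 S.F.apq sw S.qs wq psw t4 t3 swq ?_)
  intro z hz z0 z1 z2 z3 z4 hh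
  have hull : ∀ u v : Pt, 0 ≤ DD u v a → 0 ≤ DD u v p → 0 ≤ DD u v s → 0 ≤ DD u v w →
      0 ≤ DD u v q → 0 ≤ DD u v z := by
    intro u v k1 k2 k3 k4 k5
    refine hull_le (fun y hy => ?_) hh
    simp only [Set.mem_insert_iff, Set.mem_singleton_iff] at hy
    rcases hy with rfl | rfl | rfl | rfl | rfl <;> assumption
  have hqa : 0 ≤ DD q a z := by
    refine hull q a (DD_self3 _ _).ge ?_ ?_ ?_ (DD_self2 _ _).ge
    · rw [DD_rot, DD_rot]; exact S.F.apq.le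
    · rw [DD_rot, DD_rot]; exact S.qs.le
    · rw [DD_rot, DD_rot]; exact wq.le
  rw [DD_rot, DD_rot] at hqa
  rcases Finset.mem_union.1 hz with h | h
  · rcases hA' z h with r | r | r | r | r
    · exact z0 r
    · subst r; exact not_le_swap C.cq hqa
    · exact z4 r
    · exact z1 r
    · exact z2 r
  have zq : 0 < DD a z q := lt_of_le_of_ne hqa
    (C.gen a (C.uA C.ma) z hz q (C.uA C.mq) (Ne.symm z0) n2.symm z4).symm
  rcases le_or_gt (DD a s z) 0 with h1 | h1
  · have hap : 0 ≤ DD a p z := hull a p (DD_self2 _ _).ge (DD_self3 _ _).ge S.asp.le t2.le S.F.apq.le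
    have hps : 0 ≤ DD p s z := by
      refine hull p s ?_ (DD_self2 _ _).ge (DD_self3 _ _).ge psw.le t4.le
      rw [DD_rot]; exact S.asp.le
    have e : DD a p s * (z.1 - x0) = DD p s z * (a.1 - x0) - DD a s z * (p.1 - x0) +
        DD a p z * (s.1 - x0) := by
      simp only [DD_def]; ring
    have k1 := mul_nonneg hps (sub_nonneg.2 (C.hA a C.ma).le)
    have k2 := mul_nonneg (neg_nonneg.2 h1) (sub_nonneg.2 (C.hA p C.mp).le)
    have k3 := mul_nonneg hap (sub_nonneg.2 (C.hA s S.hs).le)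
    have k4 := mul_pos S.asp (sub_pos.2 (C.hB z h))
    nlinarith
  · have h2 := hlast z (Finset.mem_filter.2 ⟨h, zq, h1⟩) z3
    have h3 : 0 ≤ DD w q z := by
      refine hull w q ?_ ?_ ?_ (DD_self2 _ _).ge (DD_self3 _ _).ge
      · rw [DD_rot]; exact wq.le
      · rw [DD_rot]; exact t3.le
      · rw [DD_rot]; exact swq.le
    rw [DD_swap'] at h3
    linarith

theorem no_good (hq : a.1 < q.1) : ∀ (n : ℕ) (A B : Finset Pt) (p : Pt), A.card + B.card = n →
    ¬ Good x0 a c q b1 b2 b3 b4 A B p := by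
  intro n
  induction n using Nat.strong_induction_on with
  | _ n ih =>
    intro A B p hn G
    obtain ⟨b5, s, S⟩ := G.st hq
    have : Smaller x0 a c q b1 b2 b3 b4 A B := by
      rcases Nat.lt_or_ge 5 A.card with h | h
      · exact S.big h
      · exact S.small (le_antisymm h S.card)
    obtain ⟨A', B', p', hlt, G'⟩ := this
    exact ih _ (hn ▸ hlt) A' B' p' rfl G'

end


section
variable {x0 : ℝ} {A B : Finset Pt} {a p c q b1 b2 b3 b4 : Pt}

theorem Core.below (C : Core x0 A B a p c q b1 b2 b3 b4) (card : 5 ≤ A.card) {z0 : Pt}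
    (hz : z0 ∈ B) (n3 : z0 ≠ b3) (n4 : z0 ≠ b4) (zc : 0 < DD a z0 c) : False := by
  classical
  have zq : 0 < DD a z0 q := by
    by_contra h
    have h1 : 0 ≤ DD a q z0 := by rw [DD_swap]; linarith
    rcases C.gB2 z0 hz ⟨zc.le, h1⟩ with r | r <;> contradiction
  have zr := C.lt C.ma hz
  have rc := C.rc
  have hq : a.1 < q.1 := by
    have e := btw_x a c z0 q
    have h1 := mul_pos C.cq (sub_pos.2 zr)
    have h2 := mul_pos zq (sub_pos.2 rc)
    have := pos_of_mul_pos_right (a := DD a z0 c) (b := q.1 - a.1) (by linarith) zc.le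
    linarith
  by_cases hX : ∀ t ∈ A, 0 < DD a t q → ∃ x ∈ B, 0 < DD a x q ∧ 0 < DD a t x
  · rcases lt_trichotomy p.1 a.1 with h | h | h
    · exact no_good hq _ A B p rfl ⟨C, h, card, ⟨z0, hz, zq⟩, hX⟩
    · exact (DD_pos_ne C.pc).2.1 (C.inj a (C.uA C.ma) p (C.uA C.mp) h.symm)
    · obtain ⟨b5, hb, qb, -, g78⟩ := first_B C ⟨z0, hz, zq⟩ hX
      exact case1 C hq hb qb h g78
  · push Not at hX
    obtain ⟨t, ht, tq, hno⟩ := hX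
    obtain ⟨s, hs0, hs1⟩ := exists_first (a := a) (q := q) (A.filter (fun x => 0 < DD a x q))
      ⟨t, by simp [ht, tq]⟩ (fun x hx => (Finset.mem_filter.1 hx).2)
      (fun x hx y hy hxy => C.gen a (C.uA C.ma) x (C.uA (Finset.mem_filter.1 hx).1) y
        (C.uA (Finset.mem_filter.1 hy).1) (DD_pos_ne (Finset.mem_filter.1 hx).2).1
        (DD_pos_ne (Finset.mem_filter.1 hy).2).1 hxy)
    obtain ⟨hs, qs⟩ := Finset.mem_filter.1 hs0
    have firstA : ∀ t ∈ A, 0 < DD a t q → t ≠ s → 0 < DD a t s :=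
      fun x hx hxq hne => hs1 x (Finset.mem_filter.2 ⟨hx, hxq⟩) hne
    have hno' : ∀ x ∈ B, 0 < DD a x q → ¬ 0 < DD a s x := by
      intro x hx xq sx
      by_cases hts : t = s
      · subst hts; exact absurd sx (not_lt.2 (hno x hx xq))
      · exact absurd (trans_half xq qs tq sx (firstA t ht tq hts)) (not_lt.2 (hno x hx xq))
    have sa : a ≠ s := (DD_pos_ne qs).1
    have zs : 0 < DD a z0 s := by
      rcases C.tri (C.uA C.ma) (C.uA hs) (C.uB hz) sa (C.ne C.ma hz) (C.ne hs hz) with h | h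
      · exact absurd h (hno' z0 hz zq)
      · exact h
    have sr : a.1 < s.1 := by
      have e := btw_x a q z0 s
      have h1 := mul_pos qs (sub_pos.2 zr)
      have h2 := mul_pos zs (sub_pos.2 hq)
      have := pos_of_mul_pos_right (a := DD a z0 q) (b := s.1 - a.1) (by linarith) zq.le
      linarith
    have sp : s ≠ p := by
      rintro rfl
      have e : DD a c s * (q.1 - a.1) + DD a s q * (c.1 - a.1) + DD a q c * (s.1 - a.1) = 0 := by
        simp only [DD_def]; ring
      have h1 := mul_pos C.pc (sub_pos.2 hq)
      have h2 := mul_pos qs (sub_pos.2 rc)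
      have h3 := mul_pos C.cq (sub_pos.2 sr)
      linarith
    refine case0 C hq hs qs sp sr ?_
    intro z hz' hc
    by_contra hn
    push Not at hn
    obtain ⟨k1, k2, k3⟩ := hn
    have z1 : 0 < DD a z q := by
      rcases C.tri (C.uA C.ma) hz' (C.uA C.mq) k1.symm (DD_pos_ne qs).2.1 k2 with h | h
      · exact h
      · exact absurd hc.1 (not_le_swap h)
    have z2 : 0 < DD a s z := by
      rcases C.tri (C.uA C.ma) hz' (C.uA hs) k1.symm sa k3 with h | h
      · exact absurd hc.2 (not_le_swap h)
      · exact h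
    rcases Finset.mem_union.1 hz' with h | h
    · exact not_le_swap z2 (firstA z h z1 k3).le
    · exact hno' z h z1 z2

/-- Reflection in the horizontal axis. -/
def mir (x : Pt) : Pt := (x.1, -x.2)

theorem mir_mir (x : Pt) : mir (mir x) = x := by simp [mir]

theorem mir_inj : Function.Injective mir := fun x y h => by
  rw [← mir_mir x, h, mir_mir]

theorem DD_mir (x y z : Pt) : DD (mir x) (mir y) (mir z) = DD x z y := by
  simp only [DD_def, mir]; ring

theorem mir_hull (S : Set Pt) : convexHull ℝ (mir '' S) = mir '' convexHull ℝ S := by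
  have h : IsLinearMap ℝ mir := by
    constructor
    · intro x y; ext <;> simp [mir]; ring
    · intro r x; ext <;> simp [mir]
  exact (h.image_convexHull S).symm

theorem mir_hole {H : Finset Pt} (h : DividedFiveHole A B H) :
    DividedFiveHole (A.image mir) (B.image mir) (H.image mir) := by
  classical
  obtain ⟨⟨h1, h2, h3, h4⟩, ⟨u, hu, hu'⟩, ⟨v, hv, hv'⟩⟩ := h
  refine ⟨⟨?_, ?_, ?_, ?_⟩, ⟨mir u, ?_, ?_⟩, ⟨mir v, ?_, ?_⟩⟩
  · rw [← Finset.image_union]; exact Finset.image_subset_image h1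
  · rw [Finset.card_image_of_injective _ mir_inj, h2]
  · intro x hx
    simp only [Finset.coe_image] at hx ⊢
    obtain ⟨y, hy, rfl⟩ := hx
    rw [← Set.image_singleton, ← Set.image_sdiff mir_inj, mir_hull]
    rintro ⟨z, hz, hzy⟩
    rw [mir_inj hzy] at hz
    exact h3 y hy hz
  · intro x hx hxn
    rw [← Finset.image_union] at hx
    obtain ⟨y, hy, rfl⟩ := Finset.mem_image.1 hx
    rw [Finset.coe_image, mir_hull]
    rintro ⟨z, hz, hzy⟩
    rw [mir_inj hzy] at hz
    exact h4 y hy (fun hyH => hxn (Finset.mem_image_of_mem _ hyH)) hz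
  · exact Finset.mem_coe.2 (Finset.mem_image_of_mem _ hu)
  · exact Finset.mem_coe.2 (Finset.mem_image_of_mem _ hu')
  · exact Finset.mem_coe.2 (Finset.mem_image_of_mem _ hv)
  · exact Finset.mem_coe.2 (Finset.mem_image_of_mem _ hv')

theorem image_mir_mir (A : Finset Pt) : (A.image mir).image mir = A := by
  classical
  rw [Finset.image_image]
  have : mir ∘ mir = id := funext mir_mir
  rw [this, Finset.image_id]

theorem cone_mir {u v z : Pt} (h : cone (mir a) (mir u) (mir v) (mir z)) : cone a v u z := by
  obtain ⟨h1, h2⟩ := h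
  rw [DD_mir] at h1 h2
  exact ⟨h2, h1⟩

theorem Core.mirror (C : Core x0 A B a p c q b1 b2 b3 b4) :
    Core x0 (A.image mir) (B.image mir) (mir a) (mir q) (mir c) (mir p) (mir b4) (mir b3)
      (mir b2) (mir b1) := by
  classical
  have e1 : ∀ {P : Finset Pt} {x}, x ∈ P.image mir → ∃ y ∈ P, mir y = x :=
    fun h => Finset.mem_image.1 h
  have e2 : ∀ {P : Finset Pt} {x}, x ∈ P → mir x ∈ P.image mir :=
    fun h => Finset.mem_image_of_mem _ h
  have fst : ∀ x, (mir x).1 = x.1 := fun _ => rfl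
  refine {
    hA := ?_
    hB := ?_
    gen := ?_
    inj := ?_
    ma := e2 C.ma
    mp := e2 C.mq
    mc := e2 C.mc
    mq := e2 C.mp
    m1 := e2 C.m4
    m2 := e2 C.m3
    m3 := e2 C.m2
    m4 := e2 C.m1
    rc := C.rc
    inner := ?_
    pb1 := ?_
    pb2 := ?_
    pc := ?_
    b12 := ?_
    b1c := ?_
    b2c := ?_
    cb3 := ?_
    cb4 := ?_
    cq := ?_
    b34 := ?_
    b3q := ?_
    b4q := ?_
    gA1 := ?_
    gA2 := ?_
    gB1 := ?_
    gB2 := ?_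
    nohole := ?_ }
  · intro x hx
    obtain ⟨y, hy, rfl⟩ := e1 hx
    exact C.hA y hy
  · intro x hx
    obtain ⟨y, hy, rfl⟩ := e1 hx
    exact C.hB y hy
  · intro x hx y hy z hz h1 h2 h3
    rw [← Finset.image_union] at hx hy hz
    obtain ⟨x, kx, rfl⟩ := e1 hx
    obtain ⟨y, ky, rfl⟩ := e1 hy
    obtain ⟨z, kz, rfl⟩ := e1 hz
    rw [DD_mir]
    exact C.gen x kx z kz y ky (fun h => h2 (h ▸ rfl)) (fun h => h1 (h ▸ rfl))
      (fun h => h3 (h ▸ rfl))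
  · intro x hx y hy h
    rw [← Finset.image_union] at hx hy
    obtain ⟨x, kx, rfl⟩ := e1 hx
    obtain ⟨y, ky, rfl⟩ := e1 hy
    rw [C.inj x kx y ky h]
  · intro x hx hax u hu v hv w hw h
    obtain ⟨x, kx, rfl⟩ := e1 hx
    obtain ⟨u, ku, rfl⟩ := e1 hu
    obtain ⟨v, kv, rfl⟩ := e1 hv
    obtain ⟨w, kw, rfl⟩ := e1 hw
    simp only [DD_mir] at h
    refine C.inner x kx hax u ku w kw v kv ⟨?_, ?_, ?_⟩
    · have := h.2.2
      rwa [DD_rot] at this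
    · have := h.2.1
      rwa [DD_rot] at this
    · have := h.1
      rwa [DD_rot] at this
  · rw [DD_mir]; exact C.b4q
  · rw [DD_mir]; exact C.b3q
  · rw [DD_mir]; exact C.cq
  · rw [DD_mir]; exact C.b34
  · rw [DD_mir]; exact C.cb4
  · rw [DD_mir]; exact C.cb3
  · rw [DD_mir]; exact C.b2c
  · rw [DD_mir]; exact C.b1c
  · rw [DD_mir]; exact C.pc
  · rw [DD_mir]; exact C.b12
  · rw [DD_mir]; exact C.pb2
  · rw [DD_mir]; exact C.pb1
  · intro z hz hc
    obtain ⟨z, kz, rfl⟩ := e1 hz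
    rcases C.gA2 z kz (cone_mir hc) with r | r | r <;> simp [r]
  · intro z hz hc
    obtain ⟨z, kz, rfl⟩ := e1 hz
    rcases C.gA1 z kz (cone_mir hc) with r | r | r <;> simp [r]
  · intro z hz hc
    obtain ⟨z, kz, rfl⟩ := e1 hz
    rcases C.gB2 z kz (cone_mir hc) with r | r <;> simp [r]
  · intro z hz hc
    obtain ⟨z, kz, rfl⟩ := e1 hz
    rcases C.gB1 z kz (cone_mir hc) with r | r <;> simp [r]
  · rintro ⟨H, hH⟩
    have := mir_hole hH
    rw [image_mir_mir, image_mir_mir] at this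
    exact C.nohole ⟨_, this⟩

theorem Core.false (C : Core x0 A B a p c q b1 b2 b3 b4) (hA : 5 ≤ A.card) (hB : 5 ≤ B.card) :
    False := by
  classical
  obtain ⟨z, hz, hn⟩ : ∃ z ∈ B, z ∉ ({b1, b2, b3, b4} : Finset Pt) := by
    by_contra hcon
    push Not at hcon
    have := Finset.card_le_card (show B ⊆ {b1, b2, b3, b4} from hcon)
    have : ({b1, b2, b3, b4} : Finset Pt).card ≤ 4 := Finset.card_le_four
    omega
  simp only [Finset.mem_insert, Finset.mem_singleton, not_or] at hn
  obtain ⟨n1, n2, n3, n4⟩ := hn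
  rcases C.tri (C.uA C.ma) (C.uB hz) (C.uA C.mc) (C.ne C.ma hz) (DD_pos_ne C.pc).1
    (C.ne C.mc hz).symm with h | h
  · exact C.below hA hz n3 n4 h
  · refine C.mirror.below (z0 := mir z) ?_ (Finset.mem_image_of_mem _ hz)
      (fun h => n2 (mir_inj h)) (fun h => n1 (mir_inj h)) ?_
    · rwa [Finset.card_image_of_injective _ mir_inj]
    · rw [DD_mir]; exact h

end


theorem DD_ne_of_gen {P : Set Pt} (hgen : GenPos P) (hx : Set.InjOn Prod.fst P) :
    ∀ x ∈ P, ∀ y ∈ P, ∀ z ∈ P, x ≠ y → x ≠ z → y ≠ z → DD x y z ≠ 0 := by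
  intro x mx y my z mz hxy hxz hyz h0
  refine hgen x mx y my z mz hxy hxz hyz ?_
  have hne : y.1 - x.1 ≠ 0 := fun h => hxy (hx mx my (by show x.1 = y.1; linarith))
  rw [collinear_iff_of_mem (p₀ := x) (by simp)]
  refine ⟨y - x, ?_⟩
  rintro w (rfl | rfl | rfl)
  · exact ⟨0, by simp⟩
  · exact ⟨1, by simp⟩
  · refine ⟨(w.1 - x.1) / (y.1 - x.1), ?_⟩
    rw [DD_def] at h0
    rw [vadd_eq_add]
    ext
    · simp only [Prod.fst_add, Prod.smul_fst, Prod.fst_sub, smul_eq_mul]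
      field_simp
      ring
    · simp only [Prod.snd_add, Prod.smul_snd, Prod.snd_sub, smul_eq_mul]
      field_simp
      linarith

theorem interior_neg {A : Set Pt} {a v : Pt} (ha : a ∈ interior (convexHull ℝ A)) (hv : v ≠ a) :
    ∃ x ∈ A, DD a v x < 0 := by
  by_contra hcon
  push Not at hcon
  let g : ℝ → Pt := fun d => (a.1 + d * (v.2 - a.2), a.2 - d * (v.1 - a.1))
  have hg : Continuous g := by fun_prop
  have h0 : g 0 = a := by simp [g]
  have h1 : g ⁻¹' interior (convexHull ℝ A) ∈ nhds (0 : ℝ) :=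
    hg.continuousAt.preimage_mem_nhds (isOpen_interior.mem_nhds (by rw [h0]; exact ha))
  obtain ⟨e, he, hball⟩ := Metric.mem_nhds_iff.1 h1
  have h2 : g (e / 2) ∈ interior (convexHull ℝ A) := by
    apply hball
    rw [Metric.mem_ball, Real.dist_eq, sub_zero, abs_of_pos (by linarith)]
    linarith
  have h3 := hull_le hcon (interior_subset h2)
  have h4 : DD a v (g (e / 2)) = - (e / 2) * ((v.1 - a.1) ^ 2 + (v.2 - a.2) ^ 2) := by
    simp only [DD_def, g]; ring
  have h5 : 0 < (v.1 - a.1) ^ 2 + (v.2 - a.2) ^ 2 := by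
    by_contra h
    have k1 : v.1 - a.1 = 0 := by nlinarith [sq_nonneg (v.1 - a.1), sq_nonneg (v.2 - a.2)]
    have k2 : v.2 - a.2 = 0 := by nlinarith [sq_nonneg (v.1 - a.1), sq_nonneg (v.2 - a.2)]
    exact hv (Prod.ext (by linarith) (by linarith))
  have := mul_pos (half_pos he) h5
  linarith

theorem tri_interior {A : Set Pt} {u v w x : Pt} (hu : u ∈ A) (hv : v ∈ A) (hw : w ∈ A)
    (h : 0 < DD u v x ∧ 0 < DD v w x ∧ 0 < DD w u x) : x ∈ interior (convexHull ℝ A) := by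
  rw [mem_interior]
  have cont : ∀ u v : Pt, Continuous fun y : Pt => DD u v y := by
    intro u v
    simp only [DD_def]
    fun_prop
  refine ⟨{y | 0 < DD u v y ∧ 0 < DD v w y ∧ 0 < DD w u y}, ?_, ?_, h⟩
  · rintro y ⟨h1, h2, h3⟩
    have hs : DD v w y + DD w u y + DD u v y = DD u v w := by simp only [DD_def]; ring
    have hD : 0 < DD u v w := by linarith
    have key := (convex_convexHull ℝ A).sum_mem (t := (Finset.univ : Finset (Fin 3)))
      (w := ![DD v w y / DD u v w, DD w u y / DD u v w, DD u v y / DD u v w])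
      (z := ![u, v, w]) (by
        intro i _
        fin_cases i
        · exact (div_pos h2 hD).le
        · exact (div_pos h3 hD).le
        · exact (div_pos h1 hD).le) (by
        simp only [Fin.sum_univ_three, Matrix.cons_val_zero, Matrix.cons_val_one, Matrix.cons_val]
        rw [← add_div, ← add_div, hs, div_self hD.ne']) (by
        intro i _
        fin_cases i
        · exact subset_convexHull ℝ A hu
        · exact subset_convexHull ℝ A hv
        · exact subset_convexHull ℝ A hw)
    simp only [Fin.sum_univ_three, Matrix.cons_val_zero, Matrix.cons_val_one,
      Matrix.cons_val] at key
    convert key using 1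
    have hD' := hD.ne'
    ext
    · simp only [Prod.fst_add, Prod.smul_fst, smul_eq_mul]
      rw [div_mul_eq_mul_div, div_mul_eq_mul_div, div_mul_eq_mul_div, ← add_div, ← add_div,
        eq_div_iff hD']
      simp only [DD_def]; ring
    · simp only [Prod.snd_add, Prod.smul_snd, smul_eq_mul]
      rw [div_mul_eq_mul_div, div_mul_eq_mul_div, div_mul_eq_mul_div, ← add_div, ← add_div,
        eq_div_iff hD']
      simp only [DD_def]; ring
  · exact (isOpen_lt continuous_const (cont u v)).inter
      ((isOpen_lt continuous_const (cont v w)).inter (isOpen_lt continuous_const (cont w u)))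

theorem wedge_cone {A B : Finset Pt} {a p c b : Pt}
    (hgen : ∀ x ∈ A ∪ B, ∀ y ∈ A ∪ B, ∀ z ∈ A ∪ B, x ≠ y → x ≠ z → y ≠ z → DD x y z ≠ 0)
    (hAB : ∀ x ∈ A, ∀ y ∈ B, x ≠ y)
    (ha : a ∈ interior (convexHull ℝ (A : Set Pt))) (haA : a ∈ A)
    (hp : p ∈ A.erase a) (hc : c ∈ A.erase a)
    (hcon : (A : Set Pt) ∩ Wedge a p c ⊆ {a, p, c}) (hb : b ∈ B) (hbW : b ∈ Wedge a p c) :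
    0 < DD a c p ∧ ∀ x, x ∈ Wedge a p c ↔ cone a p c x := by
  obtain ⟨hpa, hpA⟩ := Finset.mem_erase.1 hp
  obtain ⟨hca, hcA⟩ := Finset.mem_erase.1 hc
  have key : ∀ x, cross2 (p - a) (x - a) ≤ 0 ↔ 0 ≤ DD a x p := by
    intro x
    rw [DD_swap]
    change DD a p x ≤ 0 ↔ _
    constructor <;> intro h <;> linarith
  rcases lt_trichotomy (DD a p c) 0 with h | h | h
  · refine ⟨by rw [DD_swap]; linarith, fun x => ?_⟩
    unfold Wedge
    rw [if_pos (show cross2 (p - a) (c - a) ≤ 0 from h.le)]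
    change (cross2 (p - a) (x - a) ≤ 0 ∧ 0 ≤ DD a c x) ↔ _
    rw [key]; rfl
  · exfalso
    by_cases hpc : p = c
    · subst hpc
      unfold Wedge at hbW
      rw [if_pos (show cross2 (p - a) (p - a) ≤ 0 from h.le)] at hbW
      have h1 : DD a p b ≤ 0 := hbW.1
      have h2 : 0 ≤ DD a p b := hbW.2
      exact hgen a (Finset.mem_union_left _ haA) p (Finset.mem_union_left _ hpA) b
        (Finset.mem_union_right _ hb) hpa.symm (hAB a haA b hb) (hAB p hpA b hb)
        (le_antisymm h1 h2)
    · exact hgen a (Finset.mem_union_left _ haA) p (Finset.mem_union_left _ hpA) c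
        (Finset.mem_union_left _ hcA) hpa.symm hca.symm hpc h
  · exfalso
    obtain ⟨x, hx, hneg⟩ := interior_neg ha hpa
    have hxW : x ∈ Wedge a p c := by
      unfold Wedge
      rw [if_neg (show ¬ cross2 (p - a) (c - a) ≤ 0 from not_le.2 h)]
      exact Or.inl hneg.le
    rcases hcon ⟨hx, hxW⟩ with r | r | r
    · rw [r, DD_self2] at hneg; exact lt_irrefl _ hneg
    · rw [r, DD_self3] at hneg; exact lt_irrefl _ hneg
    · rw [Set.mem_singleton_iff.1 r] at hneg; linarith

theorem wedge_two {A B : Finset Pt} {a p c : Pt}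
    (hgen : ∀ x ∈ A ∪ B, ∀ y ∈ A ∪ B, ∀ z ∈ A ∪ B, x ≠ y → x ≠ z → y ≠ z → DD x y z ≠ 0)
    (hAB : ∀ x ∈ A, ∀ y ∈ B, x ≠ y)
    (ha : a ∈ interior (convexHull ℝ (A : Set Pt))) (haA : a ∈ A)
    (hp : p ∈ A.erase a) (hc : c ∈ A.erase a)
    (hcon : (A : Set Pt) ∩ Wedge a p c ⊆ {a, p, c})
    (h2 : Set.ncard ((B : Set Pt) ∩ Wedge a p c) = 2) :
    0 < DD a c p ∧ (∀ x, x ∈ Wedge a p c ↔ cone a p c x) ∧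
    (∀ z ∈ A, cone a p c z → z = a ∨ z = p ∨ z = c) ∧
    ∃ b1 ∈ B, ∃ b2 ∈ B, 0 < DD a b1 p ∧ 0 < DD a b2 p ∧ 0 < DD a b2 b1 ∧ 0 < DD a c b1 ∧
      0 < DD a c b2 ∧ ∀ z ∈ B, cone a p c z → z = b1 ∨ z = b2 := by
  obtain ⟨hpa, hpA⟩ := Finset.mem_erase.1 hp
  obtain ⟨hca, hcA⟩ := Finset.mem_erase.1 hc
  obtain ⟨b, b', hne, hset⟩ := Set.ncard_eq_two.1 h2
  have mb : b ∈ (B : Set Pt) ∩ Wedge a p c := by rw [hset]; simp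
  have mb' : b' ∈ (B : Set Pt) ∩ Wedge a p c := by rw [hset]; simp
  obtain ⟨hpc, hW⟩ := wedge_cone hgen hAB ha haA hp hc hcon mb.1 mb.2
  have uA : ∀ {x}, x ∈ A → x ∈ A ∪ B := fun h => Finset.mem_union_left _ h
  have uB : ∀ {x}, x ∈ B → x ∈ A ∪ B := fun h => Finset.mem_union_right _ h
  have gB : ∀ z ∈ B, cone a p c z → z = b ∨ z = b' := by
    intro z hz hcz
    have : z ∈ (B : Set Pt) ∩ Wedge a p c := ⟨hz, (hW z).2 hcz⟩
    rw [hset] at this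
    simpa using this
  have str : ∀ b ∈ (B : Set Pt) ∩ Wedge a p c, 0 < DD a b p ∧ 0 < DD a c b := by
    rintro b ⟨hb, hbW⟩
    obtain ⟨k1, k2⟩ := (hW b).1 hbW
    exact ⟨lt_of_le_of_ne k1 (hgen a (uA haA) b (uB hb) p (uA hpA) (hAB a haA b hb) hpa.symm
        (hAB p hpA b hb).symm).symm,
      lt_of_le_of_ne k2 (hgen a (uA haA) c (uA hcA) b (uB hb) hca.symm (hAB a haA b hb)
        (hAB c hcA b hb)).symm⟩
  refine ⟨hpc, hW, ?_, ?_⟩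
  · intro z hz hcz
    simpa using hcon ⟨hz, (hW z).2 hcz⟩
  · rcases lt_or_gt_of_ne (hgen a (uA haA) b' (uB mb'.1) b (uB mb.1) (hAB a haA _ mb'.1)
      (hAB a haA _ mb.1) hne.symm) with h | h
    · exact ⟨b', mb'.1, b, mb.1, (str b' mb').1, (str b mb).1, by rw [DD_swap]; linarith,
        (str b' mb').2, (str b mb).2, fun z hz hcz => (gB z hz hcz).symm⟩
    · exact ⟨b, mb.1, b', mb'.1, (str b mb).1, (str b' mb').1, h,
        (str b mb).2, (str b' mb').2, gB⟩

/-- **Lemma 6.** Let `P = A ∪ B` be an `ℓ`-divided set with `A` not in convex position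
and `|A|, |B| ≥ 5`. If `W_i` and `W_{i+1}` are consecutive `a*`-wedges with
`w_i = 2 = w_{i+1}` and `1 ≤ i < t`, then there is an `ℓ`-divided 5-hole in `P`. -/
theorem two_two_consecutive_wedges
    (x0 : ℝ) (A B : Finset Pt)
    (hA : ∀ p ∈ A, p.1 < x0) (hB : ∀ p ∈ B, x0 < p.1)
    (hBne : B.Nonempty)
    (hgen : GenPos (↑(A ∪ B) : Set Pt))
    (hx : Set.InjOn Prod.fst (↑(A ∪ B) : Set Pt))
    (hAnc : ¬ ConvexPos (↑A : Set Pt))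
    (S : StarSetup x0 A)
    (hAcard : 5 ≤ A.card) (hBcard : 5 ≤ B.card)
    (i : ℕ) (hi : 1 ≤ i) (hit : i < S.t)
    (hwi : S.w B i = 2) (hwi1 : S.w B (i + 1) = 2) :
    ∃ H : Finset Pt, DividedFiveHole A B H := by
  by_contra nohole
  have gen : ∀ x ∈ A ∪ B, ∀ y ∈ A ∪ B, ∀ z ∈ A ∪ B, x ≠ y → x ≠ z → y ≠ z → DD x y z ≠ 0 :=
    DD_ne_of_gen hgen hx
  have inj : ∀ x ∈ A ∪ B, ∀ y ∈ A ∪ B, x.1 = y.1 → x = y := fun x h1 y h2 h => hx h1 h2 h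
  have hAB : ∀ x ∈ A, ∀ y ∈ B, x ≠ y := by
    rintro x h1 y h2 rfl
    exact lt_asymm (hA x h1) (hB x h2)
  have tle := S.t_le
  have r1 : i ∈ Finset.Icc 1 (A.card - 1) := Finset.mem_Icc.2 ⟨hi, by omega⟩
  have r2 : i + 1 ∈ Finset.Icc 1 (A.card - 1) := Finset.mem_Icc.2 ⟨by omega, by omega⟩
  have ma := S.aStar_mem
  have con1 := S.consec i r1
  have con2 := S.consec (i + 1) r2
  have int1 := (S.inter_iff i r1).2 hit.le
  have int2 := (S.inter_iff (i + 1) r2).2 hit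
  have ord := S.ordered i (Finset.mem_Icc.2 ⟨hi, hit.le⟩) (i + 1)
    (Finset.mem_Icc.2 ⟨by omega, hit⟩) (Nat.lt_succ_self i)
  have mp := S.lbl_mem (i - 1)
  have mc := S.lbl_mem i
  have mq := S.lbl_mem (i + 1)
  have hinterior := S.aStar_interior
  have hright := S.aStar_rightmost
  unfold StarSetup.w StarSetup.W at hwi hwi1
  rw [Nat.add_sub_cancel] at con2 int2 ord hwi1
  generalize S.aStar = a at *
  generalize S.lbl (i - 1) = p at *
  generalize S.lbl i = c at *
  generalize S.lbl (i + 1) = q at *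
  obtain ⟨pc, W1, gA1, b1, m1, b2, m2, pb1, pb2, b12, b1c, b2c, gB1⟩ :=
    wedge_two gen hAB hinterior ma mp mc con1 hwi
  obtain ⟨cq, W2, gA2, b3, m3, b4, m4, cb3, cb4, b34, b3q, b4q, gB2⟩ :=
    wedge_two gen hAB hinterior ma mc mq con2 hwi1
  obtain ⟨hpa, hpA⟩ := Finset.mem_erase.1 mp
  obtain ⟨hca, hcA⟩ := Finset.mem_erase.1 mc
  obtain ⟨hqa, hqA⟩ := Finset.mem_erase.1 mq
  have rc : a.1 < c.1 := by
    rcases lt_trichotomy a.1 c.1 with h | h | h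
    · exact h
    · exact absurd (inj a (Finset.mem_union_left _ ma) c (Finset.mem_union_left _ hcA) h).symm hca
    · exfalso
      obtain ⟨u, hu, hu0⟩ := int1
      obtain ⟨v, hv, hv0⟩ := int2
      have hv0' : v.1 = x0 := hv0
      have hax := hA a ma
      have hq : a.1 < q.1 := by
        rcases lt_trichotomy a.1 q.1 with k | k | k
        · exact k
        · exact absurd (inj a (Finset.mem_union_left _ ma) q (Finset.mem_union_left _ hqA) k).symm
            hqa
        · have := btw_left cq ((W2 v).1 hv) k h
          linarith
      obtain ⟨k1, k2⟩ := (W2 v).1 hv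
      have hd : 0 ≤ |u.2 - v.2| + 1 := by positivity
      have hv' : cone a c q (v.1, v.2 + (|u.2 - v.2| + 1)) := by
        rw [DD_def] at k1 k2
        constructor
        · rw [DD_def]
          nlinarith [mul_nonneg hd (sub_nonneg.2 h.le)]
        · rw [DD_def]
          nlinarith [mul_nonneg hd (sub_nonneg.2 hq.le)]
      have := ord u ⟨hu, hu0⟩ _ ⟨(W2 _).2 hv', hv0⟩
      have h3 := le_abs_self (u.2 - v.2)
      simp only at this
      linarith
  have C : Core x0 A B a p c q b1 b2 b3 b4 :=
    { hA := hA, hB := hB, gen := gen, inj := inj, ma := ma, mp := hpA, mc := hcA, mq := hqA,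
      m1 := m1, m2 := m2, m3 := m3, m4 := m4, rc := rc
      inner := fun x hxA hax u hu v hv w hw h =>
        absurd (hright x hxA (tri_interior (A := (A : Set Pt)) hu hv hw h)) (not_le.2 hax)
      pb1 := pb1, pb2 := pb2, pc := pc, b12 := b12, b1c := b1c, b2c := b2c, cb3 := cb3,
      cb4 := cb4, cq := cq, b34 := b34, b3q := b3q, b4q := b4q, gA1 := gA1, gA2 := gA2,
      gB1 := gB1, gB2 := gB2, nohole := nohole }
  exact C.false hAcard hBcard


end
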